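/- arXiv:2402.02011 — 2 statements merged into one kernel-verified Lean document; each statement's English description precedes it below -/
import Mathlib

section
/- (Theorem 1, second identity) Let m ≥ 3 and k ≥ 1, and let f: ℝ^m × ℝ^m → Cl_m be smooth with f(x,·) ∈ H_k for each fixed x. Then D_k f = −R_k² P_k^+ f + (2/(m+2k−4)) R_k T_k P_k^− f − (2/(m+2k−4)) Q_k T_k^* P_k^+ f − ((m+2k)/(m+2k−4)) Q_k² P_k^− f, where all projections P_k^± act in the variable u and all operators D_x act in the variable x. -/
open scoped BigOperators

/-- The defining Clifford relations `e i * e j + e j * e i = -2 δ_{ij}` for the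
generators of the real Clifford algebra `Cl_m`. -/
def CliffordRel {m : ℕ} {Cl : Type*} [Ring Cl] [Algebra ℝ Cl] (e : Fin m → Cl) : Prop :=
  ∀ i j : Fin m, e i * e j + e j * e i = algebraMap ℝ Cl (if i = j then -2 else 0)

/-- The embedding of `ℝ^m` into the Clifford algebra, `x ↦ ∑ j, x j • e j`. -/
def emb {m : ℕ} {Cl : Type*} [Ring Cl] [Algebra ℝ Cl] (e : Fin m → Cl)
    (x : Fin m → ℝ) : Cl :=
  ∑ j, x j • e j

/-- The partial derivative `∂f/∂x_j`. -/
noncomputable def pd {m : ℕ} {E : Type*} [NormedAddCommGroup E] [NormedSpace ℝ E]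
    (j : Fin m) (f : (Fin m → ℝ) → E) : (Fin m → ℝ) → E :=
  fun x => fderiv ℝ f x (Pi.single j 1)

/-- The Laplacian `Δ f = ∑ j, ∂²f/∂x_j²`. -/
noncomputable def lap {m : ℕ} {E : Type*} [NormedAddCommGroup E] [NormedSpace ℝ E]
    (f : (Fin m → ℝ) → E) : (Fin m → ℝ) → E :=
  fun x => ∑ j, pd j (pd j f) x

/-- The Dirac operator `D f = ∑ j, e j * ∂f/∂x_j` (left Clifford multiplication). -/
noncomputable def dirac {m : ℕ} {Cl : Type*} [NormedRing Cl] [NormedAlgebra ℝ Cl]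
    (e : Fin m → Cl) (f : (Fin m → ℝ) → Cl) : (Fin m → ℝ) → Cl :=
  fun x => ∑ j, e j * pd j f x

/-- `f : ℝ^m → E` is a (module-valued) polynomial homogeneous of degree `k`:
it lies in the real span of the monomial functions `x ↦ (∏ i, x i ^ α i) • c`
with total degree `∑ i, α i = k`. -/
def IsHomPoly {m : ℕ} {E : Type*} [AddCommGroup E] [Module ℝ E] (k : ℕ)
    (f : (Fin m → ℝ) → E) : Prop :=
  f ∈ Submodule.span ℝ {g : (Fin m → ℝ) → E |
    ∃ (α : Fin m → ℕ) (c : E), (∑ i, α i) = k ∧ g = fun x => (∏ i, x i ^ α i) • c}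

/-- Partial derivative `∂/∂x_j` of a function of two variables `(x, u)`. -/
noncomputable def pdx {m : ℕ} {E : Type*} [NormedAddCommGroup E] [NormedSpace ℝ E]
    (j : Fin m) (f : (Fin m → ℝ) → (Fin m → ℝ) → E) :
    (Fin m → ℝ) → (Fin m → ℝ) → E :=
  fun x u => fderiv ℝ (fun y => f y u) x (Pi.single j 1)

/-- Partial derivative `∂/∂u_j` of a function of two variables `(x, u)`. -/
noncomputable def pdu {m : ℕ} {E : Type*} [NormedAddCommGroup E] [NormedSpace ℝ E]
    (j : Fin m) (f : (Fin m → ℝ) → (Fin m → ℝ) → E) :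
    (Fin m → ℝ) → (Fin m → ℝ) → E :=
  fun x u => fderiv ℝ (fun v => f x v) u (Pi.single j 1)

/-- The Laplacian `Δ_x` in the variable `x`. -/
noncomputable def lapx {m : ℕ} {E : Type*} [NormedAddCommGroup E] [NormedSpace ℝ E]
    (f : (Fin m → ℝ) → (Fin m → ℝ) → E) : (Fin m → ℝ) → (Fin m → ℝ) → E :=
  fun x u => ∑ j, pdx j (pdx j f) x u

/-- The mixed operator `⟨∇_u, ∇_x⟩ = ∑ j, ∂_{u_j} ∂_{x_j}`. -/
noncomputable def mixDer {m : ℕ} {E : Type*} [NormedAddCommGroup E] [NormedSpace ℝ E]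
    (f : (Fin m → ℝ) → (Fin m → ℝ) → E) : (Fin m → ℝ) → (Fin m → ℝ) → E :=
  fun x u => ∑ j, pdu j (pdx j f) x u

/-- The Dirac operator `D_x = ∑ j, e j ∂_{x_j}` acting in the variable `x`. -/
noncomputable def diracx {m : ℕ} {Cl : Type*} [NormedRing Cl] [NormedAlgebra ℝ Cl]
    (e : Fin m → Cl) (f : (Fin m → ℝ) → (Fin m → ℝ) → Cl) :
    (Fin m → ℝ) → (Fin m → ℝ) → Cl :=
  fun x u => ∑ j, e j * pdx j f x u

/-- The Dirac operator `D_u = ∑ j, e j ∂_{u_j}` acting in the variable `u`. -/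
noncomputable def diracu {m : ℕ} {Cl : Type*} [NormedRing Cl] [NormedAlgebra ℝ Cl]
    (e : Fin m → Cl) (f : (Fin m → ℝ) → (Fin m → ℝ) → Cl) :
    (Fin m → ℝ) → (Fin m → ℝ) → Cl :=
  fun x u => ∑ j, e j * pdu j f x u

/-- The bosonic Laplacian (higher spin Laplace operator)
`D_k = Δ_x − 4⟨u,∇_x⟩⟨∇_u,∇_x⟩/(m+2k−2) + 4|u|²⟨∇_u,∇_x⟩²/((m+2k−2)(m+2k−4))`. -/
noncomputable def bosonic {m : ℕ} (k : ℕ) {E : Type*} [NormedAddCommGroup E]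
    [NormedSpace ℝ E] (f : (Fin m → ℝ) → (Fin m → ℝ) → E) :
    (Fin m → ℝ) → (Fin m → ℝ) → E :=
  fun x u =>
    lapx f x u
      - (4 / ((m : ℝ) + 2 * k - 2)) • ∑ s, u s • pdx s (mixDer f) x u
      + (4 / (((m : ℝ) + 2 * k - 2) * ((m : ℝ) + 2 * k - 4))) •
          ((∑ i, u i ^ 2) • mixDer (mixDer f) x u)

/-- The projection `P_k^+ = I + u D_u/(m+2k−2)` acting in the variable `u`
(`u` acts by left Clifford multiplication). -/
noncomputable def PpU {m : ℕ} {Cl : Type*} [NormedRing Cl] [NormedAlgebra ℝ Cl]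
    (e : Fin m → Cl) (k : ℕ) (f : (Fin m → ℝ) → (Fin m → ℝ) → Cl) :
    (Fin m → ℝ) → (Fin m → ℝ) → Cl :=
  fun x u => f x u + ((m : ℝ) + 2 * k - 2)⁻¹ • (emb e u * diracu e f x u)

/-- The projection `P_k^- = −u D_u/(m+2k−2)` acting in the variable `u`. -/
noncomputable def PmU {m : ℕ} {Cl : Type*} [NormedRing Cl] [NormedAlgebra ℝ Cl]
    (e : Fin m → Cl) (k : ℕ) (f : (Fin m → ℝ) → (Fin m → ℝ) → Cl) :
    (Fin m → ℝ) → (Fin m → ℝ) → Cl :=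
  fun x u => -(((m : ℝ) + 2 * k - 2)⁻¹ • (emb e u * diracu e f x u))

/-- `P_k^+ D_x`: this is the Rarita–Schwinger operator `R_k` on `C^∞(ℝ^m, M_k)` and the
twistor operator `T_k` on `C^∞(ℝ^m, uM_{k-1})`. -/
noncomputable def PpDx {m : ℕ} {Cl : Type*} [NormedRing Cl] [NormedAlgebra ℝ Cl]
    (e : Fin m → Cl) (k : ℕ) (f : (Fin m → ℝ) → (Fin m → ℝ) → Cl) :
    (Fin m → ℝ) → (Fin m → ℝ) → Cl :=
  PpU e k (diracx e f)

/-- `P_k^- D_x`: this is the dual twistor operator `T_k^*` on `C^∞(ℝ^m, M_k)` and the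
remaining operator `Q_k` on `C^∞(ℝ^m, uM_{k-1})`. -/
noncomputable def PmDx {m : ℕ} {Cl : Type*} [NormedRing Cl] [NormedAlgebra ℝ Cl]
    (e : Fin m → Cl) (k : ℕ) (f : (Fin m → ℝ) → (Fin m → ℝ) → Cl) :
    (Fin m → ℝ) → (Fin m → ℝ) → Cl :=
  PmU e k (diracx e f)

/-!
Multiplication by `u`, `D_x`, `D_u` and the scalar operators built from `u`, `∇_u`, `∇_x` satisfy
(anti)commutation relations that follow from the Clifford relations and `[∂_{u_i}, u_j] = δ_{ij}`
alone, so the identity can be checked in any representation of the Clifford–Weyl algebra. Split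
`f ∈ H_k` as `p + u q` with `p ∈ M_k` and `q ∈ M_{k-1}`, and put `c = m + 2k - 2`,
`c' = m + 2k - 4`. On `M_k` one finds `R_k = D_x - (2/c) u ⟨∇_u, ∇_x⟩` and
`T_k^* = (2/c) u ⟨∇_u, ∇_x⟩`, while `Q_k (u q) = -(c'/c) u R_{k-1} q`. Since `D_x²` is scalar it
preserves `u M_{k-1}`, whence `R_k T_k = -T_k Q_k`. Every term is thereby expressed through `p`
and `q`, and the two sides are compared coefficient by coefficient.
-/

/-! ### Clifford vectors with entries in a Weyl algebra -/

/-- Two families `b` and `c` satisfy the canonical commutation relations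
`[b i, c j] = κ δ_{ij}`; for `κ = 0` this says that they commute. -/
def HasCCR {ι R A : Type*} [DecidableEq ι] [CommRing R] [Ring A] [Algebra R A] (κ : R)
    (b c : ι → A) : Prop :=
  ∀ i j, b i * c j = c j * b i + algebraMap R A (if i = j then κ else 0)

section Commutators

variable {ι R A : Type*} [DecidableEq ι] [CommRing R] [Ring A] [Algebra R A] {κ κ' : R}
  {a b c e : ι → A}

lemma hasCCR_zero : HasCCR (0 : R) b c ↔ ∀ i j, Commute (b i) (c j) := by
  simp [HasCCR, commute_iff_eq]

lemma HasCCR.symm (h : HasCCR κ b c) : HasCCR (-κ) c b := by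
  intro i j
  rw [h j i, add_assoc, ← map_add]
  by_cases hij : i = j
  · simp [hij]
  · simp [hij, Ne.symm hij]

lemma dotProduct_mul_dotProduct_comm [Fintype ι] (heb : ∀ i j, Commute (e i) (b j))
    (hec : ∀ i j, Commute (e i) (c j)) (hba : HasCCR κ b a) (hca : HasCCR κ' c a) :
    (b ⬝ᵥ c) * (e ⬝ᵥ a) = (e ⬝ᵥ a) * (b ⬝ᵥ c) + (κ' • (e ⬝ᵥ b) + κ • (e ⬝ᵥ c)) := by
  have entry (i j : ι) : b j * c j * (e i * a i) = e i * a i * (b j * c j) +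
      (if j = i then κ' • (e i * b j) + κ • (e i * c j) else 0) :=
    calc b j * c j * (e i * a i) = e i * (b j * (c j * a i)) := by
          rw [← mul_assoc, mul_assoc (b j), ← (hec i j).eq, ← mul_assoc (b j), ← (heb i j).eq]
          simp only [mul_assoc]
      _ = e i * (b j * a i * c j + b j * algebraMap R A (if j = i then κ' else 0)) := by
          rw [hca j i, mul_add, mul_assoc]
      _ = _ := by
          rw [hba j i]
          split_ifs <;>
            simp [Algebra.algebraMap_eq_smul_one, mul_add, add_mul, mul_assoc, add_assoc, add_comm]
  simp only [dotProduct, Finset.sum_mul_sum]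
  rw [Finset.sum_comm]
  simp only [entry, Finset.sum_add_distrib, Finset.sum_ite_eq', Finset.mem_univ, if_true,
    Finset.smul_sum]

end Commutators

lemma CliffordRel.dotProduct_mul_dotProduct_add {m : ℕ} {A : Type*} [Ring A] [Algebra ℝ A]
    {e b c : Fin m → A} {κ : ℝ} (he : CliffordRel e) (heb : ∀ i j, Commute (e i) (b j))
    (hec : ∀ i j, Commute (e i) (c j)) (hbc : HasCCR κ b c) :
    (e ⬝ᵥ b) * (e ⬝ᵥ c) + (e ⬝ᵥ c) * (e ⬝ᵥ b) = (-2 : ℝ) • (c ⬝ᵥ b) - algebraMap ℝ A (m * κ) := by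
  have sq (i : Fin m) : e i * e i = -1 := by
    have h : (2 : ℝ) • (e i * e i) = (2 : ℝ) • (-1 : A) := by
      simpa [two_smul, Algebra.algebraMap_eq_smul_one] using he i i
    exact (smul_right_injective A two_ne_zero) h
  have entry (i j : Fin m) : e i * b i * (e j * c j) + e j * c j * (e i * b i) =
      if i = j then (-2 : ℝ) • (c j * b i) - algebraMap ℝ A κ else 0 :=
    calc e i * b i * (e j * c j) + e j * c j * (e i * b i)
        = e i * e j * (b i * c j) + e j * e i * (c j * b i) := by
          rw [(heb j i).symm.mul_mul_mul_comm, (hec i j).symm.mul_mul_mul_comm]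
      _ = (e i * e j + e j * e i) * (c j * b i)
            + e i * e j * algebraMap ℝ A (if i = j then κ else 0) := by
          rw [hbc i j, mul_add, add_mul, add_right_comm]
      _ = _ := by
          rw [he i j]
          split_ifs with hij
          · rw [← Algebra.smul_def, hij, sq, neg_one_mul, ← sub_eq_add_neg]
          · simp
  simp only [dotProduct, Finset.sum_mul_sum]
  rw [Finset.sum_comm (f := fun i j => e i * c i * (e j * b j))]
  simp only [← Finset.sum_add_distrib, entry, Finset.sum_ite_eq, Finset.mem_univ, if_true,
    Finset.sum_sub_distrib, Finset.smul_sum]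
  simp

lemma CliffordRel.dotProduct_mul_self {m : ℕ} {A : Type*} [Ring A] [Algebra ℝ A]
    {e b : Fin m → A} (he : CliffordRel e) (heb : ∀ i j, Commute (e i) (b j))
    (hbb : HasCCR (0 : ℝ) b b) : (e ⬝ᵥ b) * (e ⬝ᵥ b) = -(b ⬝ᵥ b) := by
  have h := he.dotProduct_mul_dotProduct_add heb heb hbb
  rw [mul_zero, map_zero, sub_zero, ← two_smul ℝ, neg_smul, ← smul_neg] at h
  exact smul_right_injective A two_ne_zero h

/-! ### The Clifford–Weyl operators -/

/-- A representation on `V` of the Clifford–Weyl algebra of polynomial differential operators in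
`u` and constant-coefficient ones in `x`: left multiplication by the generators `e j`,
multiplication by the coordinates `u j`, and the derivatives `dx j = ∂/∂x_j`, `du j = ∂/∂u_j`.
Multiplication by the `x_j` is left out because none of the operators of interest contains it. -/
structure CliffordWeylRep (m : ℕ) (V : Type*) [AddCommGroup V] [Module ℝ V] where
  e : Fin m → Module.End ℝ V
  u : Fin m → Module.End ℝ V
  dx : Fin m → Module.End ℝ V
  du : Fin m → Module.End ℝ V
  cliffordRel : CliffordRel e
  commute_e_u : ∀ i j, Commute (e i) (u j)
  commute_e_dx : ∀ i j, Commute (e i) (dx j)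
  commute_e_du : ∀ i j, Commute (e i) (du j)
  ccr_u_u : HasCCR (0 : ℝ) u u
  ccr_dx_dx : HasCCR (0 : ℝ) dx dx
  ccr_du_du : HasCCR (0 : ℝ) du du
  ccr_dx_u : HasCCR (0 : ℝ) dx u
  ccr_du_dx : HasCCR (0 : ℝ) du dx
  ccr_du_u : HasCCR (1 : ℝ) du u

namespace CliffordWeylRep

variable {m : ℕ} {V : Type*} [AddCommGroup V] [Module ℝ V] (W : CliffordWeylRep m V)

/-- Left multiplication by the Clifford vector `u`. -/
def vec : Module.End ℝ V := W.e ⬝ᵥ W.u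

/-- The Dirac operator `D_x`. -/
def diracX : Module.End ℝ V := W.e ⬝ᵥ W.dx

/-- The Dirac operator `D_u`. -/
def diracU : Module.End ℝ V := W.e ⬝ᵥ W.du

/-- The Euler operator `⟨u, ∇_u⟩`, which measures the degree in `u`. -/
def euler : Module.End ℝ V := W.u ⬝ᵥ W.du

/-- The operator `⟨u, ∇_x⟩`. -/
def mixMul : Module.End ℝ V := W.u ⬝ᵥ W.dx

/-- The operator `⟨∇_u, ∇_x⟩`. -/
def mixDer : Module.End ℝ V := W.du ⬝ᵥ W.dx

lemma diracX_diracX (w : V) : W.diracX (W.diracX w) = -(W.dx ⬝ᵥ W.dx) w :=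
  LinearMap.congr_fun (W.cliffordRel.dotProduct_mul_self W.commute_e_dx W.ccr_dx_dx) w

lemma diracU_diracU (w : V) : W.diracU (W.diracU w) = -(W.du ⬝ᵥ W.du) w :=
  LinearMap.congr_fun (W.cliffordRel.dotProduct_mul_self W.commute_e_du W.ccr_du_du) w

lemma vec_vec (w : V) : W.vec (W.vec w) = -(W.u ⬝ᵥ W.u) w :=
  LinearMap.congr_fun (W.cliffordRel.dotProduct_mul_self W.commute_e_u W.ccr_u_u) w

lemma diracU_vec (w : V) :
    W.diracU (W.vec w) = -W.vec (W.diracU w) - (2 : ℝ) • W.euler w - (m : ℝ) • w := by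
  have h := LinearMap.congr_fun (W.cliffordRel.dotProduct_mul_dotProduct_add W.commute_e_du
    W.commute_e_u W.ccr_du_u) w
  simp only [mul_one] at h
  linear_combination (norm := (simp [diracU, vec, euler]; module)) h

lemma diracX_vec (w : V) :
    W.diracX (W.vec w) = -W.vec (W.diracX w) - (2 : ℝ) • W.mixMul w := by
  have h := LinearMap.congr_fun (W.cliffordRel.dotProduct_mul_dotProduct_add W.commute_e_dx
    W.commute_e_u W.ccr_dx_u) w
  simp only [mul_zero, map_zero, sub_zero] at h
  linear_combination (norm := (simp [diracX, vec, mixMul]; module)) h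

lemma diracU_diracX (w : V) :
    W.diracU (W.diracX w) = -W.diracX (W.diracU w) - (2 : ℝ) • W.mixDer w := by
  have h := LinearMap.congr_fun (W.cliffordRel.dotProduct_mul_dotProduct_add W.commute_e_dx
    W.commute_e_du W.ccr_du_dx.symm) w
  linear_combination (norm := (simp [diracX, diracU, mixDer]; module)) h

lemma euler_vec (w : V) : W.euler (W.vec w) = W.vec (W.euler w) + W.vec w := by
  simpa [euler, vec] using LinearMap.congr_fun (dotProduct_mul_dotProduct_comm W.commute_e_u
    W.commute_e_du W.ccr_u_u W.ccr_du_u) w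

lemma euler_diracU (w : V) : W.euler (W.diracU w) = W.diracU (W.euler w) - W.diracU w := by
  simpa [euler, diracU, sub_eq_add_neg] using LinearMap.congr_fun (dotProduct_mul_dotProduct_comm
    W.commute_e_u W.commute_e_du W.ccr_du_u.symm W.ccr_du_du) w

lemma euler_diracX (w : V) : W.euler (W.diracX w) = W.diracX (W.euler w) := by
  simpa [euler, diracX] using LinearMap.congr_fun (dotProduct_mul_dotProduct_comm
    W.commute_e_u W.commute_e_du W.ccr_dx_u.symm W.ccr_du_dx) w

lemma mixMul_vec (w : V) : W.mixMul (W.vec w) = W.vec (W.mixMul w) := by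
  simpa [mixMul, vec] using LinearMap.congr_fun (dotProduct_mul_dotProduct_comm
    W.commute_e_u W.commute_e_dx W.ccr_u_u W.ccr_dx_u) w

lemma mixMul_diracX (w : V) : W.mixMul (W.diracX w) = W.diracX (W.mixMul w) := by
  simpa [mixMul, diracX] using LinearMap.congr_fun (dotProduct_mul_dotProduct_comm
    W.commute_e_u W.commute_e_dx W.ccr_dx_u.symm W.ccr_dx_dx) w

lemma mixDer_vec (w : V) : W.mixDer (W.vec w) = W.vec (W.mixDer w) + W.diracX w := by
  simpa [mixDer, vec, diracX] using LinearMap.congr_fun (dotProduct_mul_dotProduct_comm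
    W.commute_e_du W.commute_e_dx W.ccr_du_u W.ccr_dx_u) w

lemma mixDer_diracX (w : V) : W.mixDer (W.diracX w) = W.diracX (W.mixDer w) := by
  simpa [mixDer, diracX] using LinearMap.congr_fun (dotProduct_mul_dotProduct_comm
    W.commute_e_du W.commute_e_dx W.ccr_du_dx W.ccr_dx_dx) w

lemma mixDer_diracU (w : V) : W.mixDer (W.diracU w) = W.diracU (W.mixDer w) := by
  simpa [mixDer, diracU] using LinearMap.congr_fun (dotProduct_mul_dotProduct_comm
    W.commute_e_du W.commute_e_dx W.ccr_du_du W.ccr_du_dx.symm) w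

lemma euler_mixDer (w : V) : W.euler (W.mixDer w) = W.mixDer (W.euler w) - W.mixDer w := by
  have h (w : V) :
      W.mixDer w = (-(1 / 2) : ℝ) • (W.diracX (W.diracU w) + W.diracU (W.diracX w)) := by
    rw [diracU_diracX]
    module
  simp only [h, map_smul, map_add, map_sub, euler_diracX, euler_diracU]
  module

lemma diracX_diracX_vec (w : V) :
    W.diracX (W.diracX (W.vec w)) = W.vec (W.diracX (W.diracX w)) := by
  simp only [diracX_vec, map_sub, map_neg, map_smul, mixMul_diracX]
  module

lemma diracU_diracX_diracX (w : V) :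
    W.diracU (W.diracX (W.diracX w)) = W.diracX (W.diracX (W.diracU w)) := by
  simp only [diracU_diracX, map_sub, map_neg, map_smul, mixDer_diracX]
  module

lemma diracU_diracU_diracX (w : V) :
    W.diracU (W.diracU (W.diracX w)) = W.diracX (W.diracU (W.diracU w)) := by
  simp only [diracU_diracX, map_sub, map_neg, map_smul, mixDer_diracU]
  module

/-! ### Monogenics and harmonics -/

/-- The constant `m + 2k - 2` of the degree `k`; by `diracU_vec_of_mem_monogenic`, `-u D_u` is
multiplication by `weight m k` on `u M_{k-1}`. The degree is real so that `k - 1` makes sense. -/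
def weight (m : ℕ) (k : ℝ) : ℝ := m + 2 * k - 2

lemma weight_sub_one (k : ℝ) : weight m (k - 1) = weight m k - 2 := by
  rw [weight, weight]
  ring

lemma weight_sub_one_eq (k : ℝ) : weight m (k - 1) = m + 2 * k - 4 := by
  rw [weight]
  ring

lemma weight_add_one_eq (k : ℝ) : weight m (k + 1) = m + 2 * k := by
  rw [weight]
  ring

/-- The space `M_k` of monogenics of degree `k` in `u`. -/
def monogenic (k : ℝ) : Submodule ℝ V := LinearMap.ker W.diracU ⊓ W.euler.eigenspace k

/-- The space `H_k` of harmonics of degree `k` in `u`; recall that `D_u² = -Δ_u`. -/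
def harmonic (k : ℝ) : Submodule ℝ V := LinearMap.ker (W.diracU * W.diracU) ⊓ W.euler.eigenspace k

variable {W} {k : ℝ} {p q f : V}

lemma mem_monogenic : p ∈ W.monogenic k ↔ W.diracU p = 0 ∧ W.euler p = k • p := by
  simp [monogenic]

lemma mem_harmonic : f ∈ W.harmonic k ↔ W.diracU (W.diracU f) = 0 ∧ W.euler f = k • f := by
  simp [harmonic]

lemma diracU_vec_of_mem_monogenic (hq : q ∈ W.monogenic (k - 1)) :
    W.diracU (W.vec q) = -weight m k • q := by
  obtain ⟨hd, hE⟩ := mem_monogenic.1 hq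
  rw [diracU_vec, hd, hE, map_zero, weight]
  module

lemma mixDer_mem_monogenic (hp : p ∈ W.monogenic k) : W.mixDer p ∈ W.monogenic (k - 1) := by
  obtain ⟨hd, hE⟩ := mem_monogenic.1 hp
  refine mem_monogenic.2 ⟨by rw [← mixDer_diracU, hd, map_zero], ?_⟩
  rw [euler_mixDer, hE, map_smul]
  module

lemma diracU_mem_monogenic (hf : f ∈ W.harmonic k) : W.diracU f ∈ W.monogenic (k - 1) := by
  obtain ⟨hd, hE⟩ := mem_harmonic.1 hf
  refine mem_monogenic.2 ⟨hd, ?_⟩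
  rw [euler_diracU, hE, map_smul]
  module

lemma diracX_mem_harmonic (hp : p ∈ W.monogenic k) : W.diracX p ∈ W.harmonic k := by
  obtain ⟨hd, hE⟩ := mem_monogenic.1 hp
  refine mem_harmonic.2 ⟨?_, by rw [euler_diracX, hE, map_smul]⟩
  rw [diracU_diracU_diracX, hd, map_zero, map_zero]

lemma diracX_diracX_mem_monogenic (hp : p ∈ W.monogenic k) :
    W.diracX (W.diracX p) ∈ W.monogenic k := by
  obtain ⟨hd, hE⟩ := mem_monogenic.1 hp
  refine mem_monogenic.2 ⟨?_, by rw [euler_diracX, euler_diracX, hE, map_smul, map_smul]⟩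
  rw [diracU_diracX_diracX, hd, map_zero, map_zero]

variable (W) in
/-- The projection `P_k^+ = 1 + u D_u / (m + 2k - 2)`. -/
noncomputable def projPos (k : ℝ) : Module.End ℝ V := 1 + (weight m k)⁻¹ • (W.vec * W.diracU)

variable (W) in
/-- The projection `P_k^- = -u D_u / (m + 2k - 2)`. -/
noncomputable def projNeg (k : ℝ) : Module.End ℝ V := -((weight m k)⁻¹ • (W.vec * W.diracU))

lemma projPos_apply (w : V) :
    W.projPos k w = w + (weight m k)⁻¹ • W.vec (W.diracU w) := rfl

lemma projNeg_apply (w : V) : W.projNeg k w = -((weight m k)⁻¹ • W.vec (W.diracU w)) := rfl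

lemma projPos_eq_sub_projNeg (w : V) : W.projPos k w = w - W.projNeg k w := by
  rw [projPos_apply, projNeg_apply, sub_neg_eq_add]

lemma projNeg_eq_vec (w : V) : W.projNeg k w = W.vec (-(weight m k)⁻¹ • W.diracU w) := by
  rw [projNeg_apply, map_smul, neg_smul]

lemma projPos_mem_monogenic (hc : weight m k ≠ 0) (hf : f ∈ W.harmonic k) :
    W.projPos k f ∈ W.monogenic k := by
  have hq := diracU_mem_monogenic hf
  refine mem_monogenic.2 ⟨?_, ?_⟩
  · rw [projPos_apply, map_add, map_smul, diracU_vec_of_mem_monogenic hq, smul_smul]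
    simp [hc]
  · rw [projPos_apply, map_add, map_smul, euler_vec, (mem_monogenic.1 hq).2, (mem_harmonic.1 hf).2,
      map_smul]
    module

lemma projPos_vec (hc : weight m k ≠ 0) (hq : q ∈ W.monogenic (k - 1)) :
    W.projPos k (W.vec q) = 0 := by
  rw [projPos_apply, diracU_vec_of_mem_monogenic hq, map_smul, smul_smul]
  simp [hc]

/-! ### The Rarita–Schwinger and twistor operators -/

variable (W) in
/-- The operator `D_x - 2/(m+2k-2) u ⟨∇_u, ∇_x⟩`, which is the Rarita–Schwinger operator `R_k` on
`M_k`. -/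
noncomputable def raritaSchwinger (k : ℝ) : Module.End ℝ V :=
  W.diracX - (2 / weight m k) • (W.vec * W.mixDer)

lemma raritaSchwinger_apply (w : V) :
    W.raritaSchwinger k w = W.diracX w - (2 / weight m k) • W.vec (W.mixDer w) := rfl

lemma projNeg_diracX (hp : p ∈ W.monogenic k) :
    W.projNeg k (W.diracX p) = (2 / weight m k) • W.vec (W.mixDer p) := by
  rw [projNeg_apply, diracU_diracX, (mem_monogenic.1 hp).1, map_zero, neg_zero, zero_sub, map_neg,
    map_smul]
  module

lemma projPos_diracX (hp : p ∈ W.monogenic k) :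
    W.projPos k (W.diracX p) = W.raritaSchwinger k p := by
  rw [projPos_eq_sub_projNeg, projNeg_diracX hp, raritaSchwinger_apply]

lemma raritaSchwinger_mem_monogenic (hc : weight m k ≠ 0) (hp : p ∈ W.monogenic k) :
    W.raritaSchwinger k p ∈ W.monogenic k :=
  projPos_diracX hp ▸ projPos_mem_monogenic hc (diracX_mem_harmonic hp)

/-- In other words, `Q_k` is conjugate to a multiple of `R_{k-1}` through `u`. -/
lemma projNeg_diracX_vec (hc : weight m (k - 1) ≠ 0) (hq : q ∈ W.monogenic (k - 1)) :
    W.projNeg k (W.diracX (W.vec q)) =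
      -(weight m (k - 1) / weight m k) • W.vec (W.raritaSchwinger (k - 1) q) := by
  rw [projNeg_apply, diracU_diracX, diracU_vec_of_mem_monogenic hq, mixDer_vec,
    raritaSchwinger_apply]
  rw [weight_sub_one] at hc ⊢
  simp only [map_sub, map_neg, map_smul, map_add]
  match_scalars <;> field_simp

lemma raritaSchwinger_raritaSchwinger (p : V) :
    W.raritaSchwinger k (W.raritaSchwinger k p) = W.diracX (W.diracX p)
      + (4 / weight m k) • W.mixMul (W.mixDer p)
      + (4 / weight m k ^ 2) • (W.vec (W.vec (W.mixDer (W.mixDer p)))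
          + W.vec (W.diracX (W.mixDer p))) := by
  simp only [raritaSchwinger_apply, map_sub, map_smul, diracX_vec, mixDer_vec, mixDer_diracX,
    map_add]
  module

/-- In other words, `R_k T_k = -T_k Q_k`: the scalar operator `D_x²` preserves `u M_{k-1}`, which
`P_k^+` annihilates. -/
lemma projPos_diracX_projPos_diracX_vec (hc : weight m k ≠ 0) (hq : q ∈ W.monogenic (k - 1)) :
    W.projPos k (W.diracX (W.projPos k (W.diracX (W.vec q)))) =
      -W.projPos k (W.diracX (W.projNeg k (W.diracX (W.vec q)))) := by
  have hDD : W.projPos k (W.diracX (W.diracX (W.vec q))) = 0 := by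
    rw [diracX_diracX_vec, projPos_vec hc (diracX_diracX_mem_monogenic hq)]
  rw [projPos_eq_sub_projNeg (W.diracX (W.vec q)), map_sub, map_sub, hDD, zero_sub]

/-! ### The bosonic Laplacian -/

variable (W) in
/-- The bosonic Laplacian `D_k`; recall that `D_x² = -Δ_x` and `u² = -|u|²`. -/
noncomputable def bosonicLaplacian (k : ℝ) : Module.End ℝ V :=
  -(W.diracX * W.diracX) - (4 / weight m k) • (W.mixMul * W.mixDer)
    - (4 / (weight m k * weight m (k - 1))) • (W.vec * W.vec * (W.mixDer * W.mixDer))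

lemma bosonicLaplacian_apply (w : V) :
    W.bosonicLaplacian k w = -W.diracX (W.diracX w) - (4 / weight m k) • W.mixMul (W.mixDer w)
      - (4 / (weight m k * weight m (k - 1))) • W.vec (W.vec (W.mixDer (W.mixDer w))) := rfl

lemma bosonicLaplacian_of_mem_monogenic (hc : weight m k ≠ 0) (hc' : weight m (k - 1) ≠ 0)
    (hp : p ∈ W.monogenic k) :
    W.bosonicLaplacian k p = -W.projPos k (W.diracX (W.projPos k (W.diracX p)))
      - (2 / weight m (k - 1)) • W.projNeg k (W.diracX (W.projNeg k (W.diracX p))) := by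
  rw [projPos_diracX hp, projPos_diracX (raritaSchwinger_mem_monogenic hc hp),
    raritaSchwinger_raritaSchwinger, projNeg_diracX hp, map_smul, map_smul,
    projNeg_diracX_vec hc' (mixDer_mem_monogenic hp), raritaSchwinger_apply, bosonicLaplacian_apply]
  rw [weight_sub_one] at hc' ⊢
  simp only [map_sub, map_smul]
  match_scalars <;> field_simp <;> ring

lemma bosonicLaplacian_vec (hc : weight m k ≠ 0) (hc' : weight m (k - 1) ≠ 0)
    (hq : q ∈ W.monogenic (k - 1)) :
    W.bosonicLaplacian k (W.vec q) =
      (2 / weight m (k - 1)) • W.projPos k (W.diracX (W.projPos k (W.diracX (W.vec q))))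
      - (weight m (k + 1) / weight m (k - 1)) •
          W.projNeg k (W.diracX (W.projNeg k (W.diracX (W.vec q)))) := by
  have hr := raritaSchwinger_mem_monogenic hc' hq
  rw [projPos_diracX_projPos_diracX_vec hc hq, projPos_eq_sub_projNeg, projNeg_diracX_vec hc' hq,
    map_smul, map_smul, projNeg_diracX_vec hc' hr, diracX_vec,
    show weight m (k + 1) = weight m k + 2 by simp only [weight]; ring]
  simp only [raritaSchwinger_apply, bosonicLaplacian_apply]
  rw [weight_sub_one] at hc' ⊢
  simp only [map_sub, map_add, map_neg, map_smul, diracX_vec, mixDer_vec, mixDer_diracX,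
    mixMul_vec, mixMul_diracX]
  match_scalars <;> field_simp <;> ring

theorem bosonicLaplacian_of_mem_harmonic (hc : weight m k ≠ 0) (hc' : weight m (k - 1) ≠ 0)
    (hf : f ∈ W.harmonic k) :
    W.bosonicLaplacian k f =
      -W.projPos k (W.diracX (W.projPos k (W.diracX (W.projPos k f))))
      + (2 / weight m (k - 1)) •
          W.projPos k (W.diracX (W.projPos k (W.diracX (W.projNeg k f))))
      - (2 / weight m (k - 1)) •
          W.projNeg k (W.diracX (W.projNeg k (W.diracX (W.projPos k f))))
      - (weight m (k + 1) / weight m (k - 1)) •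
          W.projNeg k (W.diracX (W.projNeg k (W.diracX (W.projNeg k f)))) := by
  have hsplit : f = W.projPos k f + W.projNeg k f := by rw [projPos_eq_sub_projNeg, sub_add_cancel]
  have hq := (W.monogenic (k - 1)).smul_mem (-(weight m k)⁻¹) (diracU_mem_monogenic hf)
  conv_lhs => rw [hsplit]
  rw [map_add, bosonicLaplacian_of_mem_monogenic hc hc' (projPos_mem_monogenic hc hf),
    projNeg_eq_vec f, bosonicLaplacian_vec hc hc' hq]
  abel

end CliffordWeylRep

/-! ### Operators on smooth functions -/

open scoped ContDiff

/-- The space of smooth functions from `F` to `E`, on which differential operators with smooth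
coefficients are endomorphisms. -/
def smoothFun (F E : Type*) [NormedAddCommGroup F] [NormedSpace ℝ F] [NormedAddCommGroup E]
    [NormedSpace ℝ E] : Submodule ℝ (F → E) where
  carrier := {f | ContDiff ℝ ∞ f}
  add_mem' hf hg := by
    rw [Set.mem_ofPred_eq] at *
    exact hf.add hg
  zero_mem' := Set.mem_ofPred_eq ▸ contDiff_const
  smul_mem' c _ hf := by
    rw [Set.mem_ofPred_eq] at *
    exact hf.const_smul c

namespace smoothFun

variable {F E Cl : Type*} [NormedAddCommGroup F] [NormedSpace ℝ F] [NormedAddCommGroup E]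
  [NormedSpace ℝ E] [NormedRing Cl] [NormedAlgebra ℝ Cl]

lemma contDiff_coe (f : smoothFun F E) : ContDiff ℝ ∞ f.1 := f.2

lemma differentiable_coe (f : smoothFun F E) : Differentiable ℝ f.1 :=
  (contDiff_coe f).differentiable (by simp)

lemma contDiff_fderiv_coe (f : smoothFun F E) : ContDiff ℝ ∞ (fderiv ℝ f.1) :=
  (contDiff_coe f).fderiv_right (by simp)

/-- The derivative in the constant direction `v`. -/
noncomputable def dirDeriv (v : F) : Module.End ℝ (smoothFun F E) where
  toFun f := ⟨fun p => fderiv ℝ f.1 p v, (contDiff_fderiv_coe f).clm_apply contDiff_const⟩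
  map_add' f g := by
    ext p
    exact congrArg (· v) (fderiv_add (differentiable_coe f p) (differentiable_coe g p))
  map_smul' r f := by
    ext p
    exact congrArg (· v) (fderiv_const_smul (differentiable_coe f p) r)

/-- Multiplication by the linear function `φ`. -/
def mulLinear (φ : F →L[ℝ] ℝ) : Module.End ℝ (smoothFun F E) where
  toFun f := ⟨fun p => φ p • f.1 p, φ.contDiff.smul (contDiff_coe f)⟩
  map_add' f g := by ext p; exact smul_add _ _ _
  map_smul' r f := by ext p; exact smul_comm _ _ _

/-- Left multiplication by the constant `a`. -/
def leftMul (a : Cl) : Module.End ℝ (smoothFun F Cl) where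
  toFun f := ⟨fun p => a * f.1 p, contDiff_const.mul (contDiff_coe f)⟩
  map_add' f g := by ext p; exact mul_add _ _ _
  map_smul' r f := by ext p; exact mul_smul_comm _ _ _

lemma dirDeriv_dirDeriv_apply (v w : F) (f : smoothFun F E) (p : F) :
    (dirDeriv v (dirDeriv w f)).1 p = fderiv ℝ (fderiv ℝ f.1) p v w := by
  change fderiv ℝ (fun q => fderiv ℝ f.1 q w) p v = _
  rw [fderiv_clm_apply ((contDiff_fderiv_coe f).differentiable (by simp) p)
    (differentiableAt_const w)]
  simp

lemma commute_dirDeriv_dirDeriv (v w : F) :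
    Commute (dirDeriv v : Module.End ℝ (smoothFun F E)) (dirDeriv w) := by
  refine LinearMap.ext fun f => Subtype.ext (funext fun p => ?_)
  have hsymm : IsSymmSndFDerivAt ℝ f.1 p :=
    (contDiff_coe f).contDiffAt.isSymmSndFDerivAt
      (by simpa using WithTop.coe_le_coe.2 (le_top : (2 : ℕ∞) ≤ ⊤))
  exact (dirDeriv_dirDeriv_apply v w f p).trans
    ((hsymm.eq v w).trans (dirDeriv_dirDeriv_apply w v f p).symm)

lemma dirDeriv_mul_mulLinear (v : F) (φ : F →L[ℝ] ℝ) :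
    (dirDeriv v : Module.End ℝ (smoothFun F E)) * mulLinear φ =
      mulLinear φ * dirDeriv v + algebraMap ℝ _ (φ v) := by
  refine LinearMap.ext fun f => Subtype.ext (funext fun p => ?_)
  have h := (φ.hasFDerivAt.smul (differentiable_coe f p).hasFDerivAt).fderiv
  exact congrArg (· v) h

lemma commute_mulLinear_mulLinear (φ ψ : F →L[ℝ] ℝ) :
    Commute (mulLinear φ : Module.End ℝ (smoothFun F E)) (mulLinear ψ) :=
  LinearMap.ext fun _ => Subtype.ext (funext fun _ => smul_comm _ _ _)

lemma commute_leftMul_dirDeriv (a : Cl) (v : F) :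
    Commute (leftMul a : Module.End ℝ (smoothFun F Cl)) (dirDeriv v) :=
  LinearMap.ext fun f => Subtype.ext (funext fun p =>
    (congrArg (· v) (fderiv_const_mul (differentiable_coe f p) a)).symm)

lemma commute_leftMul_mulLinear (a : Cl) (φ : F →L[ℝ] ℝ) :
    Commute (leftMul a : Module.End ℝ (smoothFun F Cl)) (mulLinear φ) :=
  LinearMap.ext fun _ => Subtype.ext (funext fun _ => mul_smul_comm _ _ _)

lemma cliffordRel_leftMul {m : ℕ} {e : Fin m → Cl} (he : CliffordRel e) :
    CliffordRel (fun i => (leftMul (e i) : Module.End ℝ (smoothFun F Cl))) := by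
  refine fun i j => LinearMap.ext fun f => Subtype.ext (funext fun p => ?_)
  change e i * (e j * f.1 p) + e j * (e i * f.1 p) = _
  rw [← mul_assoc, ← mul_assoc, ← add_mul, he i j, ← Algebra.smul_def]
  rfl

variable {m : ℕ}

/-- The Clifford–Weyl operators on smooth functions of `(x, u)`. -/
noncomputable def cliffordWeylRep {e : Fin m → Cl} (he : CliffordRel e) :
    CliffordWeylRep m (smoothFun ((Fin m → ℝ) × (Fin m → ℝ)) Cl) where
  e i := leftMul (e i)
  u j := mulLinear ((ContinuousLinearMap.proj j).comp (ContinuousLinearMap.snd ℝ _ _))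
  dx j := dirDeriv (Pi.single j 1, 0)
  du j := dirDeriv (0, Pi.single j 1)
  cliffordRel := cliffordRel_leftMul he
  commute_e_u _ _ := commute_leftMul_mulLinear _ _
  commute_e_dx _ _ := commute_leftMul_dirDeriv _ _
  commute_e_du _ _ := commute_leftMul_dirDeriv _ _
  ccr_u_u := hasCCR_zero.2 fun _ _ => commute_mulLinear_mulLinear _ _
  ccr_dx_dx := hasCCR_zero.2 fun _ _ => commute_dirDeriv_dirDeriv _ _
  ccr_du_du := hasCCR_zero.2 fun _ _ => commute_dirDeriv_dirDeriv _ _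
  ccr_dx_u i j := by simp [dirDeriv_mul_mulLinear]
  ccr_du_dx := hasCCR_zero.2 fun _ _ => commute_dirDeriv_dirDeriv _ _
  ccr_du_u i j := by simp [dirDeriv_mul_mulLinear, Pi.single_apply, eq_comm]

lemma dotProduct_apply (a b : Fin m → Module.End ℝ (smoothFun F E)) (f : smoothFun F E) (p : F) :
    ((a ⬝ᵥ b) f).1 p = ∑ j, (a j (b j f)).1 p := by
  rw [dotProduct, LinearMap.sum_apply, Submodule.coe_sum, Finset.sum_apply]
  rfl

variable {e : Fin m → Cl} (he : CliffordRel e)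
  (f : smoothFun ((Fin m → ℝ) × (Fin m → ℝ)) Cl)

lemma curry_dx (j : Fin m) :
    Function.curry ((cliffordWeylRep he).dx j f).1 = pdx j (Function.curry f.1) := by
  ext x u
  have h := (differentiable_coe f (x, u)).hasFDerivAt.comp x (hasFDerivAt_prodMk_left (𝕜 := ℝ) x u)
  exact (congrArg (· (Pi.single j 1)) h.fderiv).symm

lemma curry_du (j : Fin m) :
    Function.curry ((cliffordWeylRep he).du j f).1 = pdu j (Function.curry f.1) := by
  ext x u
  have h := (differentiable_coe f (x, u)).hasFDerivAt.comp u (hasFDerivAt_prodMk_right (𝕜 := ℝ) x u)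
  exact (congrArg (· (Pi.single j 1)) h.fderiv).symm

lemma curry_diracX :
    Function.curry ((cliffordWeylRep he).diracX f).1 = diracx e (Function.curry f.1) := by
  ext x u
  simp only [diracx, ← curry_dx he]
  exact dotProduct_apply _ _ _ _

lemma curry_diracU :
    Function.curry ((cliffordWeylRep he).diracU f).1 = diracu e (Function.curry f.1) := by
  ext x u
  simp only [diracu, ← curry_du he]
  exact dotProduct_apply _ _ _ _

lemma curry_mixDer :
    Function.curry ((cliffordWeylRep he).mixDer f).1 = mixDer (Function.curry f.1) := by
  ext x u
  simp only [mixDer, ← curry_dx he, ← curry_du he]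
  exact dotProduct_apply _ _ _ _

lemma curry_lapx :
    Function.curry (((cliffordWeylRep he).dx ⬝ᵥ (cliffordWeylRep he).dx) f).1 =
      lapx (Function.curry f.1) := by
  ext x u
  simp only [lapx, ← curry_dx he]
  exact dotProduct_apply _ _ _ _

lemma vec_apply (x u : Fin m → ℝ) :
    ((cliffordWeylRep he).vec f).1 (x, u) = emb e u * f.1 (x, u) := by
  rw [CliffordWeylRep.vec, dotProduct_apply, emb, Finset.sum_mul]
  exact Finset.sum_congr rfl fun j _ => (mul_smul_comm _ _ _).trans (smul_mul_assoc _ _ _).symm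

lemma mixMul_apply (x u : Fin m → ℝ) :
    ((cliffordWeylRep he).mixMul f).1 (x, u) = ∑ s, u s • pdx s (Function.curry f.1) x u := by
  simp only [← curry_dx he]
  exact dotProduct_apply _ _ _ _

lemma dotProduct_u_u_apply (x u : Fin m → ℝ) :
    (((cliffordWeylRep he).u ⬝ᵥ (cliffordWeylRep he).u) f).1 (x, u) =
      (∑ i, u i ^ 2) • f.1 (x, u) := by
  rw [dotProduct_apply, Finset.sum_smul]
  exact Finset.sum_congr rfl fun i _ => by rw [pow_two, mul_smul]; rfl

lemma curry_projPos (k : ℕ) :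
    Function.curry ((cliffordWeylRep he).projPos k f).1 = PpU e k (Function.curry f.1) := by
  ext x u
  simp only [PpU, ← curry_diracU he]
  exact congrArg (f.1 (x, u) + (CliffordWeylRep.weight m k)⁻¹ • ·) (vec_apply he _ x u)

lemma curry_projNeg (k : ℕ) :
    Function.curry ((cliffordWeylRep he).projNeg k f).1 = PmU e k (Function.curry f.1) := by
  ext x u
  simp only [PmU, ← curry_diracU he]
  exact congrArg (fun y => -((CliffordWeylRep.weight m k)⁻¹ • y)) (vec_apply he _ x u)

lemma curry_projPos_diracX (k : ℕ) :
    Function.curry ((cliffordWeylRep he).projPos k ((cliffordWeylRep he).diracX f)).1 =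
      PpDx e k (Function.curry f.1) := by
  rw [curry_projPos, curry_diracX, PpDx]

lemma curry_projNeg_diracX (k : ℕ) :
    Function.curry ((cliffordWeylRep he).projNeg k ((cliffordWeylRep he).diracX f)).1 =
      PmDx e k (Function.curry f.1) := by
  rw [curry_projNeg, curry_diracX, PmDx]

lemma curry_bosonicLaplacian (k : ℕ) :
    Function.curry ((cliffordWeylRep he).bosonicLaplacian k f).1 =
      bosonic k (Function.curry f.1) := by
  ext x u
  rw [CliffordWeylRep.bosonicLaplacian_apply, CliffordWeylRep.diracX_diracX,
    CliffordWeylRep.vec_vec, neg_neg, smul_neg, sub_neg_eq_add, bosonic,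
    ← CliffordWeylRep.weight_sub_one_eq]
  simp only [← curry_mixDer he, ← curry_lapx he, ← mixMul_apply he]
  rw [Function.curry_apply (((cliffordWeylRep he).mixDer _).1), ← dotProduct_u_u_apply he]
  rfl

end smoothFun

/-! ### Homogeneous functions -/

lemma fderiv_apply_self_of_homogeneous {F E : Type*} [NormedAddCommGroup F] [NormedSpace ℝ F]
    [NormedAddCommGroup E] [NormedSpace ℝ E] {g : F → E} {k : ℕ} {u : F}
    (hg : DifferentiableAt ℝ g u) (hom : ∀ t : ℝ, g (t • u) = t ^ k • g u) :
    fderiv ℝ g u u = (k : ℝ) • g u := by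
  have hline : HasDerivAt (fun t : ℝ => t • u) u 1 := by
    simpa using (hasDerivAt_id (1 : ℝ)).smul_const u
  have hcomp : HasDerivAt (fun t : ℝ => g (t • u)) (fderiv ℝ g u u) 1 :=
    HasFDerivAt.comp_hasDerivAt 1 (by simpa using hg.hasFDerivAt) hline
  have hpow : HasDerivAt (fun t : ℝ => t ^ k • g u) ((k : ℝ) • g u) 1 := by
    simpa using (hasDerivAt_pow k (1 : ℝ)).smul_const (g u)
  exact (funext hom ▸ hcomp).unique hpow

lemma IsHomPoly.apply_smul {m k : ℕ} {E : Type*} [AddCommGroup E] [Module ℝ E]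
    {g : (Fin m → ℝ) → E} (hg : IsHomPoly k g) (u : Fin m → ℝ) (t : ℝ) :
    g (t • u) = t ^ k • g u := by
  induction hg using Submodule.span_induction with
  | mem g hg =>
    obtain ⟨α, c, hα, rfl⟩ := hg
    simp only [Pi.smul_apply, smul_eq_mul, mul_pow, Finset.prod_mul_distrib,
      Finset.prod_pow_eq_pow_sum, hα, mul_smul]
  | zero => simp
  | add g h _ _ hg hh => simp only [Pi.add_apply, hg, hh, smul_add]
  | smul r g _ hg => simp only [Pi.smul_apply, hg, smul_comm r]

namespace smoothFun

variable {m k : ℕ} {Cl : Type*} [NormedRing Cl] [NormedAlgebra ℝ Cl] {e : Fin m → Cl}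
  (he : CliffordRel e) {f : smoothFun ((Fin m → ℝ) × (Fin m → ℝ)) Cl}

lemma euler_apply (x u : Fin m → ℝ) :
    ((cliffordWeylRep he).euler f).1 (x, u) = fderiv ℝ (Function.curry f.1 x) u u := by
  calc ((cliffordWeylRep he).euler f).1 (x, u)
      = ∑ j, u j • pdu j (Function.curry f.1) x u := by
        simp only [← curry_du he]
        exact dotProduct_apply _ _ _ _
    _ = ∑ j, u j • fderiv ℝ (Function.curry f.1 x) u (Pi.single j 1) := rfl
    _ = fderiv ℝ (Function.curry f.1 x) u (∑ j, u j • Pi.single j 1) := by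
        simp only [map_sum, map_smul]
    _ = fderiv ℝ (Function.curry f.1 x) u u := by rw [← pi_eq_sum_univ']

lemma curry_lap :
    Function.curry (((cliffordWeylRep he).du ⬝ᵥ (cliffordWeylRep he).du) f).1 =
      fun x => lap (Function.curry f.1 x) := by
  ext x u
  calc _ = ∑ j, pdu j (pdu j (Function.curry f.1)) x u := by
        simp only [← curry_du he]
        exact dotProduct_apply _ _ _ _
    _ = _ := rfl

lemma mem_harmonic (hom : ∀ x u (t : ℝ), f.1 (x, t • u) = t ^ k • f.1 (x, u))
    (harm : ∀ x, lap (Function.curry f.1 x) = 0) : f ∈ (cliffordWeylRep he).harmonic k := by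
  refine CliffordWeylRep.mem_harmonic.2
    ⟨?_, Subtype.ext (funext fun ⟨x, u⟩ => (euler_apply he x u).trans ?_)⟩
  · have hlap : ((cliffordWeylRep he).du ⬝ᵥ (cliffordWeylRep he).du) f = 0 :=
      Subtype.ext (Function.curry_injective ((curry_lap he).trans (funext harm)))
    rw [CliffordWeylRep.diracU_diracU, hlap, neg_zero]
  · exact fderiv_apply_self_of_homogeneous
      ((differentiable_coe f).comp (differentiable_const x |>.prodMk differentiable_id) u) (hom x u)

end smoothFun

theorem stmt10_general {m k : ℕ} (h2 : m + 2 * k ≠ 2) (h4 : m + 2 * k ≠ 4) {Cl : Type*}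
    [NormedRing Cl] [NormedAlgebra ℝ Cl] (e : Fin m → Cl) (hrel : CliffordRel e)
    (f : (Fin m → ℝ) → (Fin m → ℝ) → Cl)
    (hf : ContDiff ℝ (⊤ : ℕ∞) (fun p : (Fin m → ℝ) × (Fin m → ℝ) => f p.1 p.2))
    (hom : ∀ x u (t : ℝ), f x (t • u) = t ^ k • f x u) (harm : ∀ x, lap (f x) = 0) :
    ∀ x u, bosonic k f x u =
        -(PpDx e k (PpDx e k (PpU e k f)) x u)
          + (2 / ((m : ℝ) + 2 * k - 4)) • PpDx e k (PpDx e k (PmU e k f)) x u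
          - (2 / ((m : ℝ) + 2 * k - 4)) • PmDx e k (PmDx e k (PpU e k f)) x u
          - (((m : ℝ) + 2 * k) / ((m : ℝ) + 2 * k - 4)) •
              PmDx e k (PmDx e k (PmU e k f)) x u := by
  intro x u
  have hc : CliffordWeylRep.weight m k ≠ 0 := sub_ne_zero.2 (mod_cast h2)
  have hc' : CliffordWeylRep.weight m (k - 1) ≠ 0 :=
    CliffordWeylRep.weight_sub_one_eq (m := m) k ▸ sub_ne_zero.2 (mod_cast h4)
  let F : smoothFun ((Fin m → ℝ) × (Fin m → ℝ)) Cl := ⟨Function.uncurry f, hf⟩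
  have key := CliffordWeylRep.bosonicLaplacian_of_mem_harmonic hc hc'
    (smoothFun.mem_harmonic hrel (f := F) hom harm)
  rw [CliffordWeylRep.weight_sub_one_eq, CliffordWeylRep.weight_add_one_eq] at key
  have hF : Function.curry F.1 = f := rfl
  simp only [← hF, ← smoothFun.curry_bosonicLaplacian hrel, ← smoothFun.curry_projPos hrel,
    ← smoothFun.curry_projNeg hrel, ← smoothFun.curry_projPos_diracX hrel,
    ← smoothFun.curry_projNeg_diracX hrel]
  exact congrArg (fun G => G.1 (x, u)) key

/-- **Theorem 1, second identity.** For `m ≥ 3`, `k ≥ 1` and smooth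
`f : ℝ^m × ℝ^m → Cl_m` with `f(x,·) ∈ H_k` for each `x`,
`D_k f = −R_k² P_k^+ f + (2/(m+2k−4)) R_k T_k P_k^- f − (2/(m+2k−4)) Q_k T_k^* P_k^+ f
− ((m+2k)/(m+2k−4)) Q_k² P_k^- f`, where `P_k^±` act in `u` and `D_x` acts in `x`. -/
theorem stmt10 {m k : ℕ} (hm : 3 ≤ m) (hk : 1 ≤ k) {Cl : Type*} [NormedRing Cl]
    [NormedAlgebra ℝ Cl] (e : Fin m → Cl) (hrel : CliffordRel e)
    (f : (Fin m → ℝ) → (Fin m → ℝ) → Cl)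
    (hf : ContDiff ℝ (⊤ : ℕ∞) (fun p : (Fin m → ℝ) × (Fin m → ℝ) => f p.1 p.2))
    (hfu : ∀ x, IsHomPoly k (f x) ∧ lap (f x) = 0) :
    ∀ x u, bosonic k f x u =
        -(PpDx e k (PpDx e k (PpU e k f)) x u)
          + (2 / ((m : ℝ) + 2 * k - 4)) • PpDx e k (PpDx e k (PmU e k f)) x u
          - (2 / ((m : ℝ) + 2 * k - 4)) • PmDx e k (PmDx e k (PpU e k f)) x u
          - (((m : ℝ) + 2 * k) / ((m : ℝ) + 2 * k - 4)) •
              PmDx e k (PmDx e k (PmU e k f)) x u :=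
  stmt10_general (by omega) (by omega) e hrel f hf (fun x => (hfu x).1.apply_smul)
    fun x => (hfu x).2
end

section
/- Let m ≥ 3 and k ≥ 1. Write f ∈ C^∞(ℝ^m, H_k) as f = f_1 + f_2 via the Almansi–Fischer decomposition, with f_1 ∈ C^∞(ℝ^m, M_k) and f_2 ∈ C^∞(ℝ^m, uM_{k−1}). Then the bosonic Laplacian acts as D_k f = −R_k² P_k^+ f_1 + (2/(m+2k−4)) R_k T_k P_k^− f_2 − (2/(m+2k−4)) Q_k T_k^* P_k^+ f_1 − ((m+2k)/(m+2k−4)) Q_k² P_k^− f_2. -/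
open scoped BigOperators

/-!
Put `N = m + 2k - 2`. The operators `D_x`, `D_u`, multiplication by `u`, `A = ⟨∇_u, ∇_x⟩`,
`B = ⟨u, ∇_x⟩`, `Δ_x` and the Euler operator in `u` are all of the form `∑ e_j a_j` or
`∑ a_j b_j`, with `a_j`, `b_j` coordinates or partial derivatives, so their relations follow from
one anticommutator and one commutator formula over the Weyl algebra.

On a monogenic `g` of degree `k` these relations give `T_k^* g = (2/N) u A g`, hence
`R_k g = D_x g - (2/N) u A g`, and the identity for `D_k g` is a direct expansion. On `u g`, with
`g` monogenic of degree `k - 1`, they give `Q_k (u g) = -((N-2)/N) u R_{k-1} g` and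
`D_k (u g) = (2/N) D_x (u R_{k-1} g) - ((N-2)/N) u R_{k-1}² g`. Splitting `D_x = T_k + Q_k` in the
first term, and using `R_k T_k = -T_k Q_k`, expresses `D_k (u g)` through `R_k T_k` and `Q_k²`.
-/

section Monogenics

variable {M : Type*} [AddCommGroup M] [Module ℝ M]

/-- The relations between `D_x`, `D_u`, left multiplication by `u`, `A = ⟨∇_u, ∇_x⟩`,
`B = ⟨u, ∇_x⟩`, `L = Δ_x` and the Euler operator `E` in `u`, in dimension `d`, on which the
calculus of monogenics rests. -/
structure HoweRelations (d : ℝ) (Dx Du u A B L E : Module.End ℝ M) : Prop where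
  Dx_Dx : ∀ f, Dx (Dx f) = -L f
  Du_Dx : ∀ f, Du (Dx f) = (-2 : ℝ) • A f - Dx (Du f)
  Dx_u : ∀ f, Dx (u f) = (-2 : ℝ) • B f - u (Dx f)
  Du_u : ∀ f, Du (u f) = (-2 : ℝ) • E f - d • f - u (Du f)
  A_Dx : ∀ f, A (Dx f) = Dx (A f)
  A_u : ∀ f, A (u f) = u (A f) + Dx f
  A_Du : ∀ f, A (Du f) = Du (A f)
  B_u : ∀ f, B (u f) = u (B f)
  L_Du : ∀ f, L (Du f) = Du (L f)
  L_u : ∀ f, L (u f) = u (L f)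
  E_Dx : ∀ f, E (Dx f) = Dx (E f)
  E_u : ∀ f, E (u f) = u (E f) + u f
  E_A : ∀ f, E (A f) = A (E f) - A f
  E_L : ∀ f, E (L f) = L (E f)

/-- The abstract form of `M_ℓ`: `g` is annihilated by the Dirac operator `Du` and homogeneous of
degree `ℓ`, the latter encoded as an eigenvector equation for the Euler operator `E`. -/
structure IsMonogenic (Du E : Module.End ℝ M) (ℓ : ℝ) (g : M) : Prop where
  Du_eq_zero : Du g = 0
  euler : E g = ℓ • g

/-- The operator `I + u D_u / N`; for `N = m + 2k - 2` it is the projection `P_k^+`. -/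
noncomputable def projPlus (N : ℝ) (Du u : Module.End ℝ M) : Module.End ℝ M :=
  1 + N⁻¹ • (u * Du)

/-- The operator `-u D_u / N`; for `N = m + 2k - 2` it is the projection `P_k^-`. -/
noncomputable def projMinus (N : ℝ) (Du u : Module.End ℝ M) : Module.End ℝ M :=
  -(N⁻¹ • (u * Du))

/-- The bosonic Laplacian with `N = m + 2k - 2`, where `|u|²` is written as `-u²`. -/
noncomputable def bosonicOp (N : ℝ) (u A B L : Module.End ℝ M) : Module.End ℝ M :=
  L - (4 / N) • (B * A) - (4 / (N * (N - 2))) • (u * u * A * A)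

lemma projPlus_apply (N : ℝ) (Du u : Module.End ℝ M) (f : M) :
    projPlus N Du u f = f + N⁻¹ • u (Du f) := rfl

lemma projMinus_apply (N : ℝ) (Du u : Module.End ℝ M) (f : M) :
    projMinus N Du u f = -(N⁻¹ • u (Du f)) := rfl

lemma bosonicOp_apply (N : ℝ) (u A B L : Module.End ℝ M) (f : M) :
    bosonicOp N u A B L f =
      L f - (4 / N) • B (A f) - (4 / (N * (N - 2))) • u (u (A (A f))) := rfl

lemma projPlus_add_projMinus (N : ℝ) (Du u : Module.End ℝ M) (f : M) :
    projPlus N Du u f + projMinus N Du u f = f := by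
  rw [projPlus_apply, projMinus_apply, add_neg_cancel_right]

lemma IsMonogenic.projPlus_eq_self {Du E : Module.End ℝ M} {ℓ : ℝ} {g : M}
    (hg : IsMonogenic Du E ℓ g) (N : ℝ) (u : Module.End ℝ M) : projPlus N Du u g = g := by
  rw [projPlus_apply, hg.Du_eq_zero, map_zero, smul_zero, add_zero]

namespace HoweRelations

variable {d ℓ N : ℝ} {Dx Du u A B L E : Module.End ℝ M} {g : M}

lemma isMonogenic_A (h : HoweRelations d Dx Du u A B L E) (hg : IsMonogenic Du E ℓ g) :
    IsMonogenic Du E (ℓ - 1) (A g) where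
  Du_eq_zero := by rw [← h.A_Du, hg.Du_eq_zero, map_zero]
  euler := by rw [h.E_A, hg.euler, map_smul, sub_smul, one_smul]

lemma isMonogenic_L (h : HoweRelations d Dx Du u A B L E) (hg : IsMonogenic Du E ℓ g) :
    IsMonogenic Du E ℓ (L g) where
  Du_eq_zero := by rw [← h.L_Du, hg.Du_eq_zero, map_zero]
  euler := by rw [h.E_L, hg.euler, map_smul]

lemma Du_u_of_isMonogenic (h : HoweRelations d Dx Du u A B L E) (hg : IsMonogenic Du E ℓ g) :
    Du (u g) = -(d + 2 * ℓ) • g := by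
  rw [h.Du_u, hg.euler, hg.Du_eq_zero, map_zero]
  module

lemma projMinus_u (h : HoweRelations d Dx Du u A B L E) (hg : IsMonogenic Du E ℓ g)
    (hNℓ : N = d + 2 * ℓ) (hN : N ≠ 0) : projMinus N Du u (u g) = u g := by
  rw [projMinus_apply, h.Du_u_of_isMonogenic hg, ← hNℓ, map_smul, neg_smul, smul_neg, neg_neg,
    inv_smul_smul₀ hN]

lemma projPlus_u (h : HoweRelations d Dx Du u A B L E) (hg : IsMonogenic Du E ℓ g)
    (hNℓ : N = d + 2 * ℓ) (hN : N ≠ 0) : projPlus N Du u (u g) = 0 := by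
  simpa only [h.projMinus_u hg hNℓ hN, add_eq_right] using projPlus_add_projMinus N Du u (u g)

lemma projPlus_Dx (h : HoweRelations d Dx Du u A B L E) (hg : IsMonogenic Du E ℓ g) :
    projPlus N Du u (Dx g) = Dx g - (2 / N) • u (A g) := by
  rw [projPlus_apply, h.Du_Dx, hg.Du_eq_zero, map_zero, sub_zero, map_smul]
  module

lemma projMinus_Dx (h : HoweRelations d Dx Du u A B L E) (hg : IsMonogenic Du E ℓ g) :
    projMinus N Du u (Dx g) = (2 / N) • u (A g) := by
  rw [projMinus_apply, h.Du_Dx, hg.Du_eq_zero, map_zero, sub_zero, map_smul]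
  module

lemma isMonogenic_projPlus_Dx (h : HoweRelations d Dx Du u A B L E) (hg : IsMonogenic Du E ℓ g)
    (hNℓ : N = d + 2 * ℓ - 2) (hN : N ≠ 0) :
    IsMonogenic Du E ℓ (projPlus N Du u (Dx g)) where
  Du_eq_zero := by
    rw [h.projPlus_Dx hg, map_sub, map_smul, h.Du_Dx, hg.Du_eq_zero,
      h.Du_u_of_isMonogenic (h.isMonogenic_A hg), map_zero, sub_zero,
      show d + 2 * (ℓ - 1) = N by rw [hNℓ]; ring]
    match_scalars
    field_simp
    norm_num
  euler := by
    rw [h.projPlus_Dx hg, map_sub, map_smul, h.E_Dx, h.E_u, hg.euler, (h.isMonogenic_A hg).euler]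
    simp only [map_smul]
    module

lemma projMinus_Dx_u (h : HoweRelations d Dx Du u A B L E) (hg : IsMonogenic Du E ℓ g)
    (hNℓ : N = d + 2 * ℓ) (hN : N ≠ 0) (hN' : N - 2 ≠ 0) :
    projMinus N Du u (Dx (u g)) = -((N - 2) / N) • u (projPlus (N - 2) Du u (Dx g)) := by
  have hDu : Du (Dx (u g)) = (N - 2) • Dx g - (2 : ℝ) • u (A g) := by
    rw [h.Du_Dx, h.A_u, h.Du_u_of_isMonogenic hg, ← hNℓ, map_smul]
    module
  rw [projMinus_apply, hDu, h.projPlus_Dx hg]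
  simp only [map_sub, map_smul]
  match_scalars <;> field_simp

/-- In the paper's notation `R_k T_k = -T_k Q_k`: the scalar operator `D_x² = -Δ_x` preserves
`uM_{k-1}`, so it has no component in `M_k`. -/
lemma projPlus_Dx_projPlus_Dx_u (h : HoweRelations d Dx Du u A B L E)
    (hg : IsMonogenic Du E ℓ g) (hNℓ : N = d + 2 * ℓ) (hN : N ≠ 0) :
    projPlus N Du u (Dx (projPlus N Du u (Dx (u g)))) =
      -projPlus N Du u (Dx (projMinus N Du u (Dx (u g)))) := by
  rw [eq_neg_iff_add_eq_zero, ← map_add, ← map_add, projPlus_add_projMinus, h.Dx_Dx, h.L_u,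
    map_neg, h.projPlus_u (h.isMonogenic_L hg) hNℓ hN, neg_zero]

lemma projPlus_Dx_sq (h : HoweRelations d Dx Du u A B L E) (hg : IsMonogenic Du E ℓ g)
    (hNℓ : N = d + 2 * ℓ - 2) (hN : N ≠ 0) :
    projPlus N Du u (Dx (projPlus N Du u (Dx g))) =
      -L g + (4 / N) • B (A g) + (4 / N ^ 2) • (u (u (A (A g))) + u (Dx (A g))) := by
  rw [h.projPlus_Dx (h.isMonogenic_projPlus_Dx hg hNℓ hN), h.projPlus_Dx hg]
  simp only [map_sub, map_add, map_smul, h.Dx_Dx, h.Dx_u, h.A_Dx, h.A_u]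
  module

lemma bosonicOp_eq_of_isMonogenic (h : HoweRelations d Dx Du u A B L E)
    (hg : IsMonogenic Du E ℓ g) (hNℓ : N = d + 2 * ℓ - 2) (hN : N ≠ 0) (hN' : N - 2 ≠ 0) :
    bosonicOp N u A B L g =
      -projPlus N Du u (Dx (projPlus N Du u (Dx g)))
        - (2 / (N - 2)) • projMinus N Du u (Dx (projMinus N Du u (Dx g))) := by
  have hQ : projMinus N Du u (Dx (projMinus N Du u (Dx g))) =
      -(2 * (N - 2) / N ^ 2) • (u (Dx (A g)) - (2 / (N - 2)) • u (u (A (A g)))) := by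
    rw [h.projMinus_Dx hg, map_smul, map_smul,
      h.projMinus_Dx_u (h.isMonogenic_A hg) (by rw [hNℓ]; ring) hN hN',
      h.projPlus_Dx (h.isMonogenic_A hg), map_sub, map_smul]
    module
  rw [h.projPlus_Dx_sq hg hNℓ hN, hQ, bosonicOp_apply]
  match_scalars <;> field_simp <;> ring

lemma bosonicOp_u (h : HoweRelations d Dx Du u A B L E)
    (hg : IsMonogenic Du E ℓ g) (hNℓ : N = d + 2 * ℓ) (hN : N ≠ 0) (hN' : N - 2 ≠ 0) :
    bosonicOp N u A B L (u g) =
      (2 / N) • Dx (u (projPlus (N - 2) Du u (Dx g))) - ((N - 2) / N) •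
        u (projPlus (N - 2) Du u (Dx (projPlus (N - 2) Du u (Dx g)))) := by
  rw [h.projPlus_Dx_sq hg (by rw [hNℓ]) hN', h.projPlus_Dx hg, bosonicOp_apply]
  simp only [map_sub, map_add, map_neg, map_smul, h.Dx_Dx, h.Dx_u, h.A_Dx, h.A_u, h.B_u, h.L_u]
  match_scalars <;> field_simp <;> ring

lemma bosonicOp_u_eq (h : HoweRelations d Dx Du u A B L E)
    (hg : IsMonogenic Du E ℓ g) (hNℓ : N = d + 2 * ℓ) (hN : N ≠ 0) (hN' : N - 2 ≠ 0) :
    bosonicOp N u A B L (u g) =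
      (2 / (N - 2)) • projPlus N Du u (Dx (projPlus N Du u (Dx (u g))))
        - ((N + 2) / (N - 2)) • projMinus N Du u (Dx (projMinus N Du u (Dx (u g)))) := by
  set r := projPlus (N - 2) Du u (Dx g) with hr
  have hr_mon : IsMonogenic Du E ℓ r := h.isMonogenic_projPlus_Dx hg (by rw [hNℓ]) hN'
  have hDr : Dx (u r) = projPlus N Du u (Dx (u r)) -
      ((N - 2) / N) • u (projPlus (N - 2) Du u (Dx r)) := by
    rw [sub_eq_add_neg, ← neg_smul, ← h.projMinus_Dx_u hr_mon hNℓ hN hN',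
      projPlus_add_projMinus]
  rw [h.projPlus_Dx_projPlus_Dx_u hg hNℓ hN, h.bosonicOp_u hg hNℓ hN hN',
    h.projMinus_Dx_u hg hNℓ hN hN', ← hr, hDr]
  simp only [map_smul, h.projMinus_Dx_u hr_mon hNℓ hN hN']
  match_scalars <;> field_simp
  ring

end HoweRelations

end Monogenics

section OperatorCalculus

open scoped Matrix

lemma lie_dotProduct {ι R : Type*} [Fintype ι] [Ring R] (c : R) (a b : ι → R) :
    ⁅c, a ⬝ᵥ b⁆ = (fun i => ⁅c, a i⁆) ⬝ᵥ b + a ⬝ᵥ fun i => ⁅c, b i⁆ := by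
  simp only [dotProduct, Ring.lie_def, Finset.mul_sum, Finset.sum_mul, ← Finset.sum_sub_distrib,
    ← Finset.sum_add_distrib]
  exact Finset.sum_congr rfl fun i _ => by noncomm_ring

lemma dotProduct_lie {ι R : Type*} [Fintype ι] [Ring R] (a b : ι → R) (c : R) :
    ⁅a ⬝ᵥ b, c⁆ = (fun i => ⁅a i, c⁆) ⬝ᵥ b + a ⬝ᵥ fun i => ⁅b i, c⁆ := by
  simp only [dotProduct, Ring.lie_def, Finset.mul_sum, Finset.sum_mul, ← Finset.sum_sub_distrib,
    ← Finset.sum_add_distrib]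
  exact Finset.sum_congr rfl fun i _ => by noncomm_ring

section WeylRel

variable {ι K R : Type*} [DecidableEq ι] [CommRing K] [Ring R] [Algebra K R]

/-- The commutation relations `[a i, b j] = β δ_{ij}` between two vectors with entries in an
algebra. -/
def WeylRel (β : K) (a b : ι → R) : Prop :=
  ∀ i j, ⁅a i, b j⁆ = algebraMap K R (if i = j then β else 0)

lemma WeylRel.symm {β : K} {a b : ι → R} (h : WeylRel β a b) : WeylRel (-β) b a := by
  intro i j
  have hlie : ⁅b i, a j⁆ = -⁅a j, b i⁆ := by simp only [Ring.lie_def, neg_sub]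
  rw [hlie, h j i, ← map_neg, apply_ite Neg.neg, neg_zero, if_congr eq_comm rfl rfl]

lemma weylRel_zero_iff {a b : ι → R} :
    WeylRel (0 : K) a b ↔ ∀ i j, Commute (a i) (b j) := by
  simp only [WeylRel, ite_self, map_zero, commute_iff_lie_eq]

variable [Fintype ι]

lemma WeylRel.dotProduct_lie_apply {α β : K} {a b w : ι → R} (ha : WeylRel α a w)
    (hb : WeylRel β b w) (j : ι) : ⁅a ⬝ᵥ b, w j⁆ = α • b j + β • a j := by
  rw [dotProduct_lie]
  simp only [ha _ j, hb _ j, dotProduct, apply_ite (algebraMap K R), map_zero,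
    ite_mul, mul_ite, zero_mul, mul_zero, Finset.sum_ite_eq', Finset.mem_univ, if_true,
    ← Algebra.commutes, ← Algebra.smul_def]

lemma WeylRel.dotProduct_lie_dotProduct {α β γ δ : K} {a b w z : ι → R} (haw : WeylRel α a w)
    (hbw : WeylRel β b w) (haz : WeylRel γ a z) (hbz : WeylRel δ b z) :
    ⁅a ⬝ᵥ b, w ⬝ᵥ z⁆ =
      α • (b ⬝ᵥ z) + β • (a ⬝ᵥ z) + γ • (w ⬝ᵥ b) + δ • (w ⬝ᵥ a) := by
  have hw : (fun j => ⁅a ⬝ᵥ b, w j⁆) = α • b + β • a :=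
    funext (haw.dotProduct_lie_apply hbw)
  have hz : (fun j => ⁅a ⬝ᵥ b, z j⁆) = γ • b + δ • a :=
    funext (haz.dotProduct_lie_apply hbz)
  simp only [lie_dotProduct, hw, hz, add_dotProduct, dotProduct_add, smul_dotProduct,
    dotProduct_smul, add_assoc]

end WeylRel

section Clifford

variable {m : ℕ} {R : Type*} [Ring R] [Algebra ℝ R]

lemma CliffordRel.sq {ε : Fin m → R} (hε : CliffordRel ε) (i : Fin m) : ε i * ε i = -1 := by
  have h : (2 : ℝ) • (ε i * ε i) = (2 : ℝ) • (-1 : R) := by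
    rw [two_smul, hε i i, if_pos rfl, Algebra.algebraMap_eq_smul_one]
    module
  exact smul_right_injective R two_ne_zero h

lemma CliffordRel.dotProduct_anticomm {ε a b : Fin m → R} {β : ℝ} (hε : CliffordRel ε)
    (ha : WeylRel (0 : ℝ) a ε) (hb : WeylRel (0 : ℝ) b ε) (hab : WeylRel β a b) :
    (ε ⬝ᵥ a) * (ε ⬝ᵥ b) + (ε ⬝ᵥ b) * (ε ⬝ᵥ a) =
      (-2 : ℝ) • (b ⬝ᵥ a) - (m * β) • (1 : R) := by
  have hterm (i j : Fin m) : ε i * a i * (ε j * b j) + ε j * b j * (ε i * a i) =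
      if i = j then (-2 : ℝ) • (b j * a i) - β • 1 else 0 := by
    have hab' : a i * b j = b j * a i + algebraMap ℝ R (if i = j then β else 0) := by
      rw [← hab i j, Ring.lie_def, add_sub_cancel]
    rw [(weylRel_zero_iff.1 ha i j).mul_mul_mul_comm, (weylRel_zero_iff.1 hb j i).mul_mul_mul_comm,
      hab', mul_add, add_right_comm, ← add_mul, hε i j]
    split_ifs with hij
    · rw [← hij, hε.sq, ← Algebra.smul_def, Algebra.algebraMap_eq_smul_one, neg_one_mul,
        ← sub_eq_add_neg]
    · simp only [map_zero, zero_mul, mul_zero, add_zero]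
  have hcomm : (ε ⬝ᵥ b) * (ε ⬝ᵥ a) = ∑ i, ∑ j, ε j * b j * (ε i * a i) := by
    simp only [dotProduct, Finset.sum_mul_sum]
    exact Finset.sum_comm
  rw [hcomm]
  simp only [dotProduct, Finset.sum_mul_sum, ← Finset.sum_add_distrib, hterm, Finset.sum_ite_eq,
    Finset.mem_univ, if_true, Finset.sum_sub_distrib, Finset.smul_sum, Finset.sum_const,
    Finset.card_univ, Fintype.card_fin, ← Nat.cast_smul_eq_nsmul ℝ, smul_smul]

lemma CliffordRel.dotProduct_mul_self_s12 {ε a : Fin m → R} (hε : CliffordRel ε)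
    (ha : WeylRel (0 : ℝ) a ε) (haa : WeylRel (0 : ℝ) a a) :
    (ε ⬝ᵥ a) * (ε ⬝ᵥ a) = -(a ⬝ᵥ a) := by
  have h : (2 : ℝ) • ((ε ⬝ᵥ a) * (ε ⬝ᵥ a)) = (2 : ℝ) • -(a ⬝ᵥ a) := by
    rw [two_smul, hε.dotProduct_anticomm ha ha haa, mul_zero, zero_smul, sub_zero, neg_smul,
      smul_neg]
  exact smul_right_injective R two_ne_zero h

end Clifford

/-- The relations between left multiplication `ε` by the Clifford generators, the partial
derivatives `X` in `x` and `U` in `u`, and multiplication `Y` by the coordinates of `u`. -/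
structure CliffordWeyl {m : ℕ} {R : Type*} [Ring R] [Algebra ℝ R] (ε X U Y : Fin m → R) :
    Prop where
  clifford : CliffordRel ε
  X_ε : WeylRel (0 : ℝ) X ε
  U_ε : WeylRel (0 : ℝ) U ε
  Y_ε : WeylRel (0 : ℝ) Y ε
  X_X : WeylRel (0 : ℝ) X X
  U_U : WeylRel (0 : ℝ) U U
  Y_Y : WeylRel (0 : ℝ) Y Y
  X_U : WeylRel (0 : ℝ) X U
  X_Y : WeylRel (0 : ℝ) X Y
  U_Y : WeylRel (1 : ℝ) U Y

lemma CliffordWeyl.howeRelations {m : ℕ} {M : Type*} [AddCommGroup M] [Module ℝ M]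
    {ε X U Y : Fin m → Module.End ℝ M} (h : CliffordWeyl ε X U Y) :
    HoweRelations (m : ℝ) (ε ⬝ᵥ X) (ε ⬝ᵥ U) (ε ⬝ᵥ Y) (U ⬝ᵥ X) (Y ⬝ᵥ X) (X ⬝ᵥ X) (Y ⬝ᵥ U) := by
  have U_X : WeylRel (0 : ℝ) U X := neg_zero (G := ℝ) ▸ h.X_U.symm
  have Y_X : WeylRel (0 : ℝ) Y X := neg_zero (G := ℝ) ▸ h.X_Y.symm
  have Y_U : WeylRel (-1 : ℝ) Y U := h.U_Y.symm
  have anticomm {a b : Fin m → Module.End ℝ M} {β : ℝ} (ha : WeylRel (0 : ℝ) a ε)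
      (hb : WeylRel (0 : ℝ) b ε) (hab : WeylRel β a b) (f : M) :
      (ε ⬝ᵥ a) ((ε ⬝ᵥ b) f) + (ε ⬝ᵥ b) ((ε ⬝ᵥ a) f) = (-2 : ℝ) • (b ⬝ᵥ a) f - (m * β) • f :=
    LinearMap.congr_fun (h.clifford.dotProduct_anticomm ha hb hab) f
  have comm {a b w z : Fin m → Module.End ℝ M} {α β γ δ : ℝ} (haw : WeylRel α a w)
      (hbw : WeylRel β b w) (haz : WeylRel γ a z) (hbz : WeylRel δ b z) (f : M) :
      (a ⬝ᵥ b) ((w ⬝ᵥ z) f) = (w ⬝ᵥ z) ((a ⬝ᵥ b) f) +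
        (α • (b ⬝ᵥ z) f + β • (a ⬝ᵥ z) f + γ • (w ⬝ᵥ b) f + δ • (w ⬝ᵥ a) f) :=
    sub_eq_iff_eq_add'.1 (LinearMap.congr_fun (haw.dotProduct_lie_dotProduct hbw haz hbz) f)
  constructor <;> intro f
  case Dx_Dx => exact LinearMap.congr_fun (h.clifford.dotProduct_mul_self_s12 h.X_ε h.X_X) f
  case Du_Dx => simpa using eq_sub_of_add_eq' (anticomm h.X_ε h.U_ε h.X_U f)
  case Dx_u => simpa using eq_sub_of_add_eq (anticomm h.X_ε h.Y_ε h.X_Y f)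
  case Du_u => simpa using eq_sub_of_add_eq (anticomm h.U_ε h.Y_ε h.U_Y f)
  case A_Dx => simpa using comm h.U_ε h.X_ε U_X h.X_X f
  case A_u => simpa using comm h.U_ε h.X_ε h.U_Y h.X_Y f
  case A_Du => simpa using comm h.U_ε h.X_ε h.U_U h.X_U f
  case B_u => simpa using comm h.Y_ε h.X_ε h.Y_Y h.X_Y f
  case L_Du => simpa using comm h.X_ε h.X_ε h.X_U h.X_U f
  case L_u => simpa using comm h.X_ε h.X_ε h.X_Y h.X_Y f
  case E_Dx => simpa using comm h.Y_ε h.U_ε Y_X U_X f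
  case E_u => simpa using comm h.Y_ε h.U_ε h.Y_Y h.U_Y f
  case E_A => simpa [sub_eq_add_neg] using comm Y_U h.U_U Y_X U_X f
  case E_L => simpa using comm Y_X U_X Y_X U_X f

section SmoothFun

open scoped ContDiff Manifold

/-- Smooth functions `V → E`, bundled as Mathlib's `C^∞` maps between manifolds so that they
form a real vector space. -/
abbrev SmoothFun (V E : Type*) [NormedAddCommGroup V] [NormedSpace ℝ V] [NormedAddCommGroup E]
    [NormedSpace ℝ E] : Type _ :=
  C^∞⟮𝓘(ℝ, V), V; 𝓘(ℝ, E), E⟯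

variable {V E : Type*} [NormedAddCommGroup V] [NormedSpace ℝ V] [NormedAddCommGroup E]
  [NormedSpace ℝ E]

namespace SmoothFun

lemma contDiff (F : SmoothFun V E) : ContDiff ℝ ∞ F := F.contMDiff.contDiff

lemma differentiable (F : SmoothFun V E) : Differentiable ℝ F := F.contDiff.differentiable (by simp)

lemma contDiff_fderiv (F : SmoothFun V E) : ContDiff ℝ ∞ (fderiv ℝ F) :=
  F.contDiff.fderiv_right (by simp)

/-- The directional derivative along `v`. -/
noncomputable def dirDeriv (v : V) : Module.End ℝ (SmoothFun V E) where
  toFun F := ⟨fun p => fderiv ℝ F p v, (F.contDiff_fderiv.clm_apply contDiff_const).contMDiff⟩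
  map_add' F G := by
    ext p
    exact DFunLike.congr_fun (fderiv_add (F.differentiable p) (G.differentiable p)) v
  map_smul' c F := by
    ext p
    exact DFunLike.congr_fun (fderiv_const_smul (F.differentiable p) c) v

/-- Multiplication by a continuous linear functional. -/
noncomputable def mulDual (φ : V →L[ℝ] ℝ) : Module.End ℝ (SmoothFun V E) where
  toFun F := ⟨fun p => φ p • F p, (φ.contDiff.smul F.contDiff).contMDiff⟩
  map_add' F G := by ext p; exact smul_add _ _ _
  map_smul' c F := by ext p; exact smul_comm _ _ _

/-- Left multiplication by a constant. -/
noncomputable def constMul {A : Type*} [NormedRing A] [NormedAlgebra ℝ A] (c : A) :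
    Module.End ℝ (SmoothFun V A) where
  toFun F := ⟨fun p => c * F p, (contDiff_const.mul F.contDiff).contMDiff⟩
  map_add' F G := by ext p; exact mul_add _ _ _
  map_smul' r F := by ext p; exact mul_smul_comm _ _ _

lemma dirDeriv_dirDeriv_apply (v w : V) (F : SmoothFun V E) (p : V) :
    dirDeriv v (dirDeriv w F) p = fderiv ℝ (fderiv ℝ F) p v w := by
  have hF : DifferentiableAt ℝ (fderiv ℝ F) p := F.contDiff_fderiv.differentiable (by simp) p
  change fderiv ℝ (fun q => fderiv ℝ F q w) p v = _
  rw [fderiv_clm_apply hF (differentiableAt_const w)]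
  simp

lemma commute_dirDeriv (v w : V) :
    Commute (dirDeriv v : Module.End ℝ (SmoothFun V E)) (dirDeriv w) := by
  ext F p
  have hsymm : IsSymmSndFDerivAt ℝ F p := F.contDiff.contDiffAt.isSymmSndFDerivAt <| by
    rw [minSmoothness_of_isRCLikeNormedField]
    exact WithTop.coe_le_coe.2 le_top
  change dirDeriv v (dirDeriv w F) p = dirDeriv w (dirDeriv v F) p
  rw [dirDeriv_dirDeriv_apply, dirDeriv_dirDeriv_apply]
  exact hsymm v w

lemma dotProduct_apply_apply {ι : Type*} [Fintype ι] (a b : ι → Module.End ℝ (SmoothFun V E))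
    (F : SmoothFun V E) (p : V) : (a ⬝ᵥ b) F p = ∑ i, a i (b i F) p := by
  simp only [dotProduct, LinearMap.sum_apply, Module.End.mul_apply]
  exact (congrFun (map_sum ContMDiffMap.coeFnAddMonoidHom _ _) p).trans (Finset.sum_apply _ _ _)

lemma commute_mulDual (φ ψ : V →L[ℝ] ℝ) :
    Commute (mulDual φ : Module.End ℝ (SmoothFun V E)) (mulDual ψ) := by
  ext F p
  exact smul_comm _ _ _

lemma dirDeriv_lie_mulDual (v : V) (φ : V →L[ℝ] ℝ) :
    ⁅(dirDeriv v : Module.End ℝ (SmoothFun V E)), mulDual φ⁆ =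
      algebraMap ℝ (Module.End ℝ (SmoothFun V E)) (φ v) := by
  rw [Ring.lie_def, sub_eq_iff_eq_add']
  ext F p
  change fderiv ℝ (fun q => φ q • F q) p v = φ p • fderiv ℝ F p v + φ v • F p
  rw [fderiv_fun_smul φ.differentiableAt (F.differentiable p), φ.fderiv]
  rfl

variable {A : Type*} [NormedRing A] [NormedAlgebra ℝ A]

lemma commute_dirDeriv_constMul (v : V) (c : A) :
    Commute (dirDeriv v : Module.End ℝ (SmoothFun V A)) (constMul c) := by
  ext F p
  exact DFunLike.congr_fun (fderiv_const_mul (F.differentiable p) c) v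

lemma commute_mulDual_constMul (φ : V →L[ℝ] ℝ) (c : A) :
    Commute (mulDual φ : Module.End ℝ (SmoothFun V A)) (constMul c) := by
  ext F p
  exact (mul_smul_comm _ _ _).symm

lemma cliffordRel_constMul {m : ℕ} {e : Fin m → A} (he : CliffordRel e) :
    CliffordRel fun j => (constMul (e j) : Module.End ℝ (SmoothFun V A)) := by
  intro i j
  ext F p
  change e i * (e j * F p) + e j * (e i * F p) = (if i = j then (-2 : ℝ) else 0) • F p
  rw [← mul_assoc, ← mul_assoc, ← add_mul, he i j, Algebra.smul_def]

end SmoothFun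

end SmoothFun

section TwoVariables

open scoped ContDiff

variable {m : ℕ}

/-- Smooth functions of two variables `x, u ∈ ℝ^m`. -/
abbrev SmoothFun₂ (m : ℕ) (E : Type*) [NormedAddCommGroup E] [NormedSpace ℝ E] : Type _ :=
  SmoothFun ((Fin m → ℝ) × (Fin m → ℝ)) E

section Operators

variable {E : Type*} [NormedAddCommGroup E] [NormedSpace ℝ E]

/-- The partial derivative `∂/∂x_j`. -/
noncomputable def partialX (j : Fin m) : Module.End ℝ (SmoothFun₂ m E) :=
  SmoothFun.dirDeriv (Pi.single j 1, 0)

/-- The partial derivative `∂/∂u_j`. -/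
noncomputable def partialU (j : Fin m) : Module.End ℝ (SmoothFun₂ m E) :=
  SmoothFun.dirDeriv (0, Pi.single j 1)

/-- Multiplication by the coordinate `u_j`. -/
noncomputable def coordU (j : Fin m) : Module.End ℝ (SmoothFun₂ m E) :=
  SmoothFun.mulDual (ContinuousLinearMap.proj j ∘L ContinuousLinearMap.snd ℝ _ _)

lemma pdx_curry (j : Fin m) (F : SmoothFun₂ m E) :
    pdx j (Function.curry F) = Function.curry (partialX j F) := by
  funext x u
  exact DFunLike.congr_fun ((F.differentiable (x, u)).hasFDerivAt.comp x
    (hasFDerivAt_prodMk_left (𝕜 := ℝ) x u)).fderiv (Pi.single j 1)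

lemma pdu_curry (j : Fin m) (F : SmoothFun₂ m E) :
    pdu j (Function.curry F) = Function.curry (partialU j F) := by
  funext x u
  exact DFunLike.congr_fun ((F.differentiable (x, u)).hasFDerivAt.comp u
    (hasFDerivAt_prodMk_right (𝕜 := ℝ) x u)).fderiv (Pi.single j 1)

lemma lapx_curry (F : SmoothFun₂ m E) :
    lapx (Function.curry F) = Function.curry ((partialX ⬝ᵥ partialX) F) := by
  funext x u
  simp only [lapx, pdx_curry]
  exact (SmoothFun.dotProduct_apply_apply _ _ F (x, u)).symm

lemma mixDer_curry (F : SmoothFun₂ m E) :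
    mixDer (Function.curry F) = Function.curry ((partialU ⬝ᵥ partialX) F) := by
  funext x u
  simp only [mixDer, pdx_curry, pdu_curry]
  exact (SmoothFun.dotProduct_apply_apply _ _ F (x, u)).symm

lemma coordU_dotProduct_apply (T : Fin m → Module.End ℝ (SmoothFun₂ m E)) (F : SmoothFun₂ m E)
    (x u : Fin m → ℝ) : (coordU ⬝ᵥ T) F (x, u) = ∑ j, u j • T j F (x, u) :=
  SmoothFun.dotProduct_apply_apply _ _ F (x, u)

lemma coordU_dotProduct_coordU_apply (F : SmoothFun₂ m E) (x u : Fin m → ℝ) :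
    (coordU ⬝ᵥ coordU) F (x, u) = (∑ j, u j ^ 2) • F (x, u) := by
  rw [coordU_dotProduct_apply, Finset.sum_smul]
  exact Finset.sum_congr rfl fun j _ => by rw [pow_two, mul_smul]; rfl

end Operators

section CliffordValued

variable {Cl : Type*} [NormedRing Cl] [NormedAlgebra ℝ Cl] {e : Fin m → Cl}

/-- The Dirac operator `D_x` on bundled smooth functions. -/
noncomputable def xDirac (e : Fin m → Cl) : Module.End ℝ (SmoothFun₂ m Cl) :=
  (fun j => SmoothFun.constMul (e j)) ⬝ᵥ partialX

/-- The Dirac operator `D_u` on bundled smooth functions. -/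
noncomputable def uDirac (e : Fin m → Cl) : Module.End ℝ (SmoothFun₂ m Cl) :=
  (fun j => SmoothFun.constMul (e j)) ⬝ᵥ partialU

/-- Left Clifford multiplication by `u` on bundled smooth functions. -/
noncomputable def uMul (e : Fin m → Cl) : Module.End ℝ (SmoothFun₂ m Cl) :=
  (fun j => SmoothFun.constMul (e j)) ⬝ᵥ coordU

lemma CliffordRel.cliffordWeyl (he : CliffordRel e) :
    CliffordWeyl (fun j => (SmoothFun.constMul (e j) : Module.End ℝ (SmoothFun₂ m Cl)))
      partialX partialU coordU where
  clifford := SmoothFun.cliffordRel_constMul he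
  X_ε := weylRel_zero_iff.2 fun _ _ => SmoothFun.commute_dirDeriv_constMul _ _
  U_ε := weylRel_zero_iff.2 fun _ _ => SmoothFun.commute_dirDeriv_constMul _ _
  Y_ε := weylRel_zero_iff.2 fun _ _ => SmoothFun.commute_mulDual_constMul _ _
  X_X := weylRel_zero_iff.2 fun _ _ => SmoothFun.commute_dirDeriv _ _
  U_U := weylRel_zero_iff.2 fun _ _ => SmoothFun.commute_dirDeriv _ _
  Y_Y := weylRel_zero_iff.2 fun _ _ => SmoothFun.commute_mulDual _ _
  X_U := weylRel_zero_iff.2 fun _ _ => SmoothFun.commute_dirDeriv _ _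
  X_Y i j := by
    rw [partialX, coordU, SmoothFun.dirDeriv_lie_mulDual]
    simp
  U_Y i j := by
    rw [partialU, coordU, SmoothFun.dirDeriv_lie_mulDual]
    simp [Pi.single_apply, eq_comm]

lemma CliffordRel.howeRelations (he : CliffordRel e) :
    HoweRelations (m : ℝ) (xDirac e) (uDirac e) (uMul e) (partialU ⬝ᵥ partialX)
      (coordU ⬝ᵥ partialX) (partialX ⬝ᵥ partialX) (coordU ⬝ᵥ partialU) :=
  he.cliffordWeyl.howeRelations

lemma uMul_uMul (he : CliffordRel e) (F : SmoothFun₂ m Cl) :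
    uMul e (uMul e F) = -(coordU ⬝ᵥ coordU) F :=
  have h := he.cliffordWeyl
  LinearMap.congr_fun (h.clifford.dotProduct_mul_self_s12 h.Y_ε h.Y_Y) F

lemma uMul_apply (e : Fin m → Cl) (F : SmoothFun₂ m Cl) (x u : Fin m → ℝ) :
    uMul e F (x, u) = emb e u * F (x, u) := by
  rw [uMul, SmoothFun.dotProduct_apply_apply, emb, Finset.sum_mul]
  exact Finset.sum_congr rfl fun j _ =>
    (mul_smul_comm (u j) (e j) _).trans (smul_mul_assoc _ _ _).symm

lemma diracx_curry (e : Fin m → Cl) (F : SmoothFun₂ m Cl) :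
    diracx e (Function.curry F) = Function.curry (xDirac e F) := by
  funext x u
  simp only [diracx, pdx_curry]
  exact (SmoothFun.dotProduct_apply_apply (fun j => SmoothFun.constMul (e j)) partialX F
    (x, u)).symm

lemma diracu_curry (e : Fin m → Cl) (F : SmoothFun₂ m Cl) :
    diracu e (Function.curry F) = Function.curry (uDirac e F) := by
  funext x u
  simp only [diracu, pdu_curry]
  exact (SmoothFun.dotProduct_apply_apply (fun j => SmoothFun.constMul (e j)) partialU F
    (x, u)).symm

lemma PpU_curry (e : Fin m → Cl) (k : ℕ) (F : SmoothFun₂ m Cl) :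
    PpU e k (Function.curry F) =
      Function.curry (projPlus ((m : ℝ) + 2 * k - 2) (uDirac e) (uMul e) F) := by
  funext x u
  simp only [PpU, diracu_curry, Function.curry_apply, ← uMul_apply]
  rfl

lemma PmU_curry (e : Fin m → Cl) (k : ℕ) (F : SmoothFun₂ m Cl) :
    PmU e k (Function.curry F) =
      Function.curry (projMinus ((m : ℝ) + 2 * k - 2) (uDirac e) (uMul e) F) := by
  funext x u
  simp only [PmU, diracu_curry, Function.curry_apply, ← uMul_apply]
  rfl

lemma PpDx_curry (e : Fin m → Cl) (k : ℕ) (F : SmoothFun₂ m Cl) :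
    PpDx e k (Function.curry F) =
      Function.curry (projPlus ((m : ℝ) + 2 * k - 2) (uDirac e) (uMul e) (xDirac e F)) := by
  rw [PpDx, diracx_curry, PpU_curry]

lemma PmDx_curry (e : Fin m → Cl) (k : ℕ) (F : SmoothFun₂ m Cl) :
    PmDx e k (Function.curry F) =
      Function.curry (projMinus ((m : ℝ) + 2 * k - 2) (uDirac e) (uMul e) (xDirac e F)) := by
  rw [PmDx, diracx_curry, PmU_curry]

lemma bosonic_curry (he : CliffordRel e) (k : ℕ) (F : SmoothFun₂ m Cl) :
    bosonic k (Function.curry F) =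
      Function.curry (bosonicOp ((m : ℝ) + 2 * k - 2) (uMul e) (partialU ⬝ᵥ partialX)
        (coordU ⬝ᵥ partialX) (partialX ⬝ᵥ partialX) F) := by
  funext x u
  rw [bosonicOp_apply, uMul_uMul he, smul_neg, sub_neg_eq_add]
  simp only [bosonic, lapx_curry, mixDer_curry, pdx_curry, Function.curry_apply]
  rw [← coordU_dotProduct_apply, ← coordU_dotProduct_coordU_apply,
    show (m : ℝ) + 2 * k - 4 = m + 2 * k - 2 - 2 by ring]
  rfl

end CliffordValued

section HomogeneousPolynomials

variable {E : Type*} [NormedAddCommGroup E] [NormedSpace ℝ E]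

namespace IsHomPoly

lemma contDiff {k : ℕ} {g : (Fin m → ℝ) → E} (hg : IsHomPoly k g) : ContDiff ℝ ∞ g := by
  induction hg using Submodule.span_induction with
  | mem g hg =>
    obtain ⟨α, c, -, rfl⟩ := hg
    exact (contDiff_prod fun i _ => (contDiff_apply ℝ ℝ i).pow (α i)).smul contDiff_const
  | zero => exact contDiff_const
  | add f g _ _ hf hg => exact hf.add hg
  | smul c f _ hf => exact hf.const_smul c

lemma apply_smul_s12 {k : ℕ} {g : (Fin m → ℝ) → E} (hg : IsHomPoly k g) (t : ℝ)
    (u : Fin m → ℝ) : g (t • u) = t ^ k • g u := by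
  induction hg using Submodule.span_induction with
  | mem g hg =>
    obtain ⟨α, c, rfl, rfl⟩ := hg
    simp [mul_pow, Finset.prod_mul_distrib, Finset.prod_pow_eq_pow_sum, mul_smul]
  | zero => simp
  | add f g _ _ hf hg => simp [hf, hg]
  | smul c f _ hf => simp [hf, smul_comm c]

lemma sum_smul_pd {k : ℕ} {g : (Fin m → ℝ) → E} (hg : IsHomPoly k g) (u : Fin m → ℝ) :
    ∑ j, u j • pd j g u = (k : ℝ) • g u := by
  have hg' : HasFDerivAt g (fderiv ℝ g u) ((1 : ℝ) • u) := by
    rw [one_smul]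
    exact (hg.contDiff.differentiable (by simp) u).hasFDerivAt
  have hray : HasDerivAt (fun t : ℝ => t • u) u 1 := by
    simpa using (hasDerivAt_id (1 : ℝ)).smul_const u
  have hchain : HasDerivAt (fun t : ℝ => g (t • u)) (fderiv ℝ g u u) 1 :=
    hg'.comp_hasDerivAt 1 hray
  have hpow : HasDerivAt (fun t : ℝ => g (t • u)) ((k : ℝ) • g u) 1 := by
    simp only [hg.apply_smul_s12]
    simpa using (hasDerivAt_pow k (1 : ℝ)).smul_const (g u)
  calc ∑ j, u j • pd j g u = fderiv ℝ g u (∑ j, u j • Pi.single j 1) := by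
        simp only [map_sum, map_smul, pd]
    _ = fderiv ℝ g u u := by rw [← pi_eq_sum_univ' u]
    _ = (k : ℝ) • g u := hchain.unique hpow

end IsHomPoly

end HomogeneousPolynomials

section MonogenicValued

variable {Cl : Type*} [NormedRing Cl] [NormedAlgebra ℝ Cl] {e : Fin m → Cl} {k : ℕ}

lemma isMonogenic_of_forall {F : SmoothFun₂ m Cl}
    (hF : ∀ x, IsHomPoly k (Function.curry F x) ∧ dirac e (Function.curry F x) = 0) :
    IsMonogenic (uDirac e) (coordU ⬝ᵥ partialU) (k : ℝ) F where
  Du_eq_zero := by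
    ext ⟨x, u⟩
    exact (congrFun₂ (diracu_curry e F) x u).symm.trans (congrFun (hF x).2 u)
  euler := by
    ext ⟨x, u⟩
    have hpd (j : Fin m) : partialU j F (x, u) = pd j (Function.curry F x) u :=
      (congrFun₂ (pdu_curry j F) x u).symm
    rw [coordU_dotProduct_apply]
    simp only [hpd]
    exact (hF x).1.sum_smul_pd u

lemma dirac_emb_mul (he : CliffordRel e) {q : (Fin m → ℝ) → Cl} (hq : IsHomPoly k q)
    (hq' : dirac e q = 0) :
    dirac e (fun u => emb e u * q u) = -((m : ℝ) + 2 * k) • q := by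
  let G : SmoothFun₂ m Cl := ⟨fun p => q p.2, (hq.contDiff.comp contDiff_snd).contMDiff⟩
  have hG : IsMonogenic (uDirac e) (coordU ⬝ᵥ partialU) (k : ℝ) G :=
    isMonogenic_of_forall fun _ => ⟨hq, hq'⟩
  have huG : Function.curry (uMul e G) = fun _ u => emb e u * q u :=
    funext₂ fun x u => uMul_apply e G x u
  calc dirac e (fun u => emb e u * q u) = diracu e (fun _ u => emb e u * q u) 0 := rfl
    _ = Function.curry (uDirac e (uMul e G)) 0 := by rw [← huG, diracu_curry]
    _ = -((m : ℝ) + 2 * k) • q := by rw [he.howeRelations.Du_u_of_isMonogenic hG]; rfl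

lemma exists_uMul_eq (he : CliffordRel e) (hmk : (m : ℝ) + 2 * k ≠ 0) (F : SmoothFun₂ m Cl)
    (hF : ∀ x, ∃ q : (Fin m → ℝ) → Cl, IsHomPoly k q ∧ dirac e q = 0 ∧
      Function.curry F x = fun u => emb e u * q u) :
    ∃ G, uMul e G = F ∧ IsMonogenic (uDirac e) (coordU ⬝ᵥ partialU) (k : ℝ) G := by
  choose q hq hq' hFq using hF
  -- `q` comes without regularity in `x`; since `D_u (u q) = -(m + 2k) q`, it is smooth with `F`.
  let G : SmoothFun₂ m Cl := -((m : ℝ) + 2 * k)⁻¹ • uDirac e F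
  have hG (x : Fin m → ℝ) : Function.curry G x = q x := by
    calc Function.curry G x = -((m : ℝ) + 2 * k)⁻¹ • Function.curry (uDirac e F) x := rfl
      _ = -((m : ℝ) + 2 * k)⁻¹ • dirac e (Function.curry F x) := by rw [← diracu_curry]; rfl
      _ = q x := by
        rw [hFq, dirac_emb_mul he (hq x) (hq' x), smul_smul, neg_mul_neg, inv_mul_cancel₀ hmk,
          one_smul]
  refine ⟨G, ?_, isMonogenic_of_forall fun x => by rw [hG]; exact ⟨hq x, hq' x⟩⟩
  ext ⟨x, u⟩
  calc uMul e G (x, u) = emb e u * Function.curry G x u := uMul_apply e G x u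
    _ = Function.curry F x u := by rw [hG, hFq]

end MonogenicValued

end TwoVariables

end OperatorCalculus

theorem stmt12_general {m k : ℕ} (hmk : m + 2 * k ≠ 2) (hmk' : m + 2 * k ≠ 4) (hk : 1 ≤ k)
    {Cl : Type*} [NormedRing Cl] [NormedAlgebra ℝ Cl] (e : Fin m → Cl) (hrel : CliffordRel e)
    (f f₁ f₂ : (Fin m → ℝ) → (Fin m → ℝ) → Cl)
    (hf₁ : ContDiff ℝ (⊤ : ℕ∞) (fun p : (Fin m → ℝ) × (Fin m → ℝ) => f₁ p.1 p.2))
    (hf₂ : ContDiff ℝ (⊤ : ℕ∞) (fun p : (Fin m → ℝ) × (Fin m → ℝ) => f₂ p.1 p.2))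
    (hf₁M : ∀ x, IsHomPoly k (f₁ x) ∧ dirac e (f₁ x) = 0)
    (hf₂M : ∀ x, ∃ q : (Fin m → ℝ) → Cl, IsHomPoly (k - 1) q ∧ dirac e q = 0 ∧
      f₂ x = fun u => emb e u * q u)
    (hsum : f = fun x u => f₁ x u + f₂ x u) :
    ∀ x u, bosonic k f x u =
        -(PpDx e k (PpDx e k (PpU e k f₁)) x u)
          + (2 / ((m : ℝ) + 2 * k - 4)) • PpDx e k (PpDx e k (PmU e k f₂)) x u
          - (2 / ((m : ℝ) + 2 * k - 4)) • PmDx e k (PmDx e k (PpU e k f₁)) x u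
          - (((m : ℝ) + 2 * k) / ((m : ℝ) + 2 * k - 4)) •
              PmDx e k (PmDx e k (PmU e k f₂)) x u := by
  intro x u
  have hN : (m : ℝ) + 2 * k - 2 ≠ 0 := sub_ne_zero.2 (mod_cast hmk)
  have hN4 : (m : ℝ) + 2 * k - 4 = m + 2 * k - 2 - 2 := by ring
  have hN2 : (m : ℝ) + 2 * k - 2 + 2 = m + 2 * k := by ring
  have hN' : (m : ℝ) + 2 * k - 2 - 2 ≠ 0 := hN4 ▸ sub_ne_zero.2 (mod_cast hmk')
  have hNk : (m : ℝ) + 2 * k - 2 = m + 2 * (k - 1 : ℕ) := by rw [Nat.cast_pred hk]; ring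
  have hH := hrel.howeRelations
  obtain ⟨F₁, rfl⟩ : ∃ F : SmoothFun₂ m Cl, f₁ = Function.curry F :=
    ⟨⟨_, hf₁.contMDiff⟩, rfl⟩
  obtain ⟨F₂, rfl⟩ : ∃ F : SmoothFun₂ m Cl, f₂ = Function.curry F :=
    ⟨⟨_, hf₂.contMDiff⟩, rfl⟩
  obtain rfl : f = Function.curry (F₁ + F₂) := hsum
  have hF₁ := isMonogenic_of_forall hf₁M
  obtain ⟨G, rfl, hG⟩ := exists_uMul_eq hrel (hNk ▸ hN) F₂ hf₂M
  simp only [bosonic_curry hrel, PpU_curry, PmU_curry, PpDx_curry, PmDx_curry, map_add, hN4,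
    hF₁.projPlus_eq_self, hH.projMinus_u hG hNk hN,
    hH.bosonicOp_eq_of_isMonogenic hF₁ rfl hN hN', hH.bosonicOp_u_eq hG hNk hN hN', hN2]
  exact (sub_add_sub_comm _ _ _ _).trans (sub_sub _ _ _).symm

/-- For `m ≥ 3`, `k ≥ 1`, write `f ∈ C^∞(ℝ^m, H_k)` as `f = f₁ + f₂` via
the Almansi–Fischer decomposition, with `f₁ ∈ C^∞(ℝ^m, M_k)` and `f₂ ∈ C^∞(ℝ^m, uM_{k-1})`.
Then the bosonic Laplacian acts as
`D_k f = −R_k² P_k^+ f₁ + (2/(m+2k−4)) R_k T_k P_k^- f₂ − (2/(m+2k−4)) Q_k T_k^* P_k^+ f₁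
− ((m+2k)/(m+2k−4)) Q_k² P_k^- f₂`. -/
theorem stmt12 {m k : ℕ} (hm : 3 ≤ m) (hk : 1 ≤ k) {Cl : Type*} [NormedRing Cl]
    [NormedAlgebra ℝ Cl] (e : Fin m → Cl) (hrel : CliffordRel e)
    (f f₁ f₂ : (Fin m → ℝ) → (Fin m → ℝ) → Cl)
    (hf₁ : ContDiff ℝ (⊤ : ℕ∞) (fun p : (Fin m → ℝ) × (Fin m → ℝ) => f₁ p.1 p.2))
    (hf₂ : ContDiff ℝ (⊤ : ℕ∞) (fun p : (Fin m → ℝ) × (Fin m → ℝ) => f₂ p.1 p.2))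
    (hf₁M : ∀ x, IsHomPoly k (f₁ x) ∧ dirac e (f₁ x) = 0)
    (hf₂M : ∀ x, ∃ q : (Fin m → ℝ) → Cl, IsHomPoly (k - 1) q ∧ dirac e q = 0 ∧
      f₂ x = fun u => emb e u * q u)
    (hsum : f = fun x u => f₁ x u + f₂ x u) :
    ∀ x u, bosonic k f x u =
        -(PpDx e k (PpDx e k (PpU e k f₁)) x u)
          + (2 / ((m : ℝ) + 2 * k - 4)) • PpDx e k (PpDx e k (PmU e k f₂)) x u
          - (2 / ((m : ℝ) + 2 * k - 4)) • PmDx e k (PmDx e k (PpU e k f₁)) x u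
          - (((m : ℝ) + 2 * k) / ((m : ℝ) + 2 * k - 4)) •
              PmDx e k (PmDx e k (PmU e k f₂)) x u := by
  exact stmt12_general (by omega) (by omega) hk e hrel f f₁ f₂ hf₁ hf₂ hf₁M hf₂M hsum
end
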